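/- Let K be a field equipped with two commuting ring endomorphisms φ and σ such that the subfield K^φ = {a ∈ K | φ(a) = a} is algebraically closed and σ maps K^φ onto itself. Let A ∈ GL_n(K). Then there exists a σ-PV extension for φ(y) = A y: a commutative ring L with commuting ring endomorphisms Φ and Σ, an injective ring homomorphism ι : K → L with Φ ∘ ι = ι ∘ φ and Σ ∘ ι = ι ∘ σ, such that (L, Φ) is a φ-pseudo field, the Φ-constants of L are exactly ι(K^φ), and there is Y ∈ GL_n(L) with Φ applied entrywise to Y equal to (ι applied entrywise to A) · Y and L is σ-generated by Y over K: every element of L can be written as a · b^{-1} where a and b lie in the ι(K)-subalgebra of L generated by the entries of Σ^i(Y) for all i ≥ 0, and b is a unit in L. -/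

import Mathlib

/-- A `φ`-ring `R` is `φ`-simple if the zero ideal and the whole ring are its only
`φ`-ideals (ideals `I` with `φ(I) ⊆ I`). -/
def DiffSimple {R : Type*} [CommRing R] (φ : R →+* R) : Prop :=
  (⊥ : Ideal R) ≠ ⊤ ∧ ∀ I : Ideal R, (∀ x ∈ I, φ x ∈ I) → I = ⊥ ∨ I = ⊤

/-- A `φ`-pseudo field is a `φ`-simple Noetherian `φ`-ring in which every
non-zero-divisor is a unit. -/
def PseudoField (R : Type*) [CommRing R] (φ : R →+* R) : Prop :=
  DiffSimple φ ∧ IsNoetherianRing R ∧ ∀ x ∈ nonZeroDivisors R, IsUnit x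

theorem det_mul_eq_sum {A : Type*} [CommRing A] {Γ : Type*} [Fintype Γ] {j : ℕ}
    (U : Matrix (Fin j) Γ A) (M : Matrix Γ (Fin j) A) :
    (U * M).det = ∑ f : Fin j → Γ, (∏ b, M (f b) b) * (U.submatrix id f).det := by
  classical
  have h1 : (U * M).det =
      (Matrix.detRowAlternating (R := A) (n := Fin j)).toMultilinearMap
        (fun b => ∑ s : Γ, M s b • (fun a => U a s)) := by
    rw [← Matrix.det_transpose]
    change (Matrix.det _) = Matrix.det _
    congr 1
    ext b a
    simp [Matrix.mul_apply, mul_comm]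
  rw [h1, MultilinearMap.map_sum]
  refine Finset.sum_congr rfl fun f _ => ?_
  rw [MultilinearMap.map_smul_univ, smul_eq_mul, ← Matrix.det_transpose (U.submatrix id f)]
  rfl

theorem exists_projection_of_stable {A : Type*} [CommRing A] {φ : A →+* A} (hφ : DiffSimple φ)
    {Γ : Type*} [Fintype Γ] [DecidableEq Γ] {M M' : Matrix Γ Γ A} (hM : M * M' = 1)
    (N : Submodule A (Γ → A)) (hN : ∀ a ∈ N, Matrix.vecMul (fun γ => φ (a γ)) M ∈ N) :
    ∃ P : (Γ → A) →ₗ[A] (Γ → A), (∀ a, P a ∈ N) ∧ ∀ a ∈ N, P a = a := by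
  classical
  let I : ℕ → Ideal A := fun j => Ideal.span
    {x | ∃ (v : Fin j → N) (c : Fin j → Γ), x = Matrix.det (Matrix.of fun a b => (v a : Γ → A) (c b))}
  have hI : ∀ j, I j = ⊥ ∨ I j = ⊤ := by
    intro j
    refine hφ.2 _ fun x hx => ?_
    refine Submodule.span_induction ?_ ?_ ?_ ?_ hx
    · rintro _ ⟨v, c, rfl⟩
      let u : Fin j → N := fun a => ⟨_, hN _ (v a).2⟩
      have h2 : φ (Matrix.det (Matrix.of fun a b => (v a : Γ → A) (c b))) =
          ((Matrix.of fun a s => (u a : Γ → A) s) * (M'.submatrix id c)).det := by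
        rw [RingHom.map_det]
        congr 1
        have h3 : (Matrix.of fun a s => (u a : Γ → A) s) =
            (Matrix.of fun a s => φ ((v a : Γ → A) s)) * M := by
          ext a s
          simp [u, Matrix.mul_apply, Matrix.vecMul, dotProduct]
        have h4 : M'.submatrix id c = M' * (1 : Matrix Γ Γ A).submatrix id c := by
          ext a b
          simp [Matrix.mul_apply, Matrix.one_apply]
        rw [h3, h4, Matrix.mul_assoc, ← Matrix.mul_assoc M, hM, Matrix.one_mul]
        ext a b
        simp [Matrix.mul_apply, Matrix.one_apply]
      rw [h2, det_mul_eq_sum]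
      exact Ideal.sum_mem _ fun f _ => Ideal.mul_mem_left _ _ (Ideal.subset_span ⟨u, f, rfl⟩)
    · simp
    · intro x y _ _ hx hy
      rw [map_add]
      exact add_mem hx hy
    · intro a x _ hx
      rw [smul_eq_mul, map_mul]
      exact Ideal.mul_mem_left _ _ hx
  have hbig : I (Fintype.card Γ + 1) = ⊥ := by
    rw [eq_bot_iff, Ideal.span_le]
    rintro _ ⟨v, c, rfl⟩
    have : ¬ Function.Injective c := fun h => by
      have := Fintype.card_le_of_injective c h
      simp at this
    simp only [Function.Injective, not_forall] at this
    obtain ⟨p, q, hpq, hne⟩ := this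
    exact Matrix.det_zero_of_column_eq hne (fun i => by simp [hpq])
  have hex : ∃ j, I j = ⊥ := ⟨_, hbig⟩
  obtain ⟨k, hk⟩ : ∃ k, Nat.find hex = k + 1 := by
    refine Nat.exists_eq_succ_of_ne_zero fun h0 => ?_
    have h := Nat.find_spec hex
    rw [h0] at h
    apply hφ.1
    rw [← h, Ideal.eq_top_iff_one]
    exact Ideal.subset_span ⟨Fin.elim0, Fin.elim0, by simp⟩
  have hzero : I (k + 1) = ⊥ := hk ▸ Nat.find_spec hex
  have hone : I k = ⊤ := (hI k).resolve_left (Nat.find_min hex (by omega))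
  have hdet0 : ∀ (v : Fin (k + 1) → N) (c : Fin (k + 1) → Γ),
      Matrix.det (Matrix.of fun a b => (v a : Γ → A) (c b)) = 0 := by
    intro v c
    have : Matrix.det (Matrix.of fun a b => (v a : Γ → A) (c b)) ∈ I (k + 1) :=
      Ideal.subset_span ⟨v, c, rfl⟩
    rwa [hzero] at this
  have key : ∀ δ ∈ I k, ∃ P : (Γ → A) →ₗ[A] (Γ → A), (∀ a, P a ∈ N) ∧
      ∀ a ∈ N, P a = δ • a := by
    intro δ hδ
    refine Submodule.span_induction ?_ ?_ ?_ ?_ hδ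
    · rintro _ ⟨v, c, rfl⟩
      let F : Γ → (Γ → A) →ₗ[A] A := fun γ =>
        { toFun := fun w => Matrix.detRowAlternating
            (Fin.cons (fun b => w ((Fin.cons γ c : Fin (k+1) → Γ) b))
            (fun a b => (v a : Γ → A) ((Fin.cons γ c : Fin (k+1) → Γ) b)) :
              Fin (k+1) → Fin (k+1) → A)
          map_add' := fun w w' =>
            (Matrix.detRowAlternating (R := A) (n := Fin (k+1))).toMultilinearMap.cons_add _ _ _
          map_smul' := fun r w =>
            (Matrix.detRowAlternating (R := A) (n := Fin (k+1))).toMultilinearMap.cons_smul _ _ _ }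
      have hF : ∀ γ w, F γ w = Matrix.det (Matrix.of fun i b =>
          (Fin.cons w (fun a => (v a : Γ → A)) : Fin (k+1) → Γ → A) i
            ((Fin.cons γ c : Fin (k+1) → Γ) b)) := by
        intro γ w
        change Matrix.det _ = _
        congr 1
        ext i b
        refine Fin.cases ?_ (fun i => ?_) i <;> simp
      refine ⟨(Matrix.det (Matrix.of fun a b => (v a : Γ → A) (c b))) • LinearMap.id - LinearMap.pi F,
        fun w => ?_, fun w hw => ?_⟩
      · have : ((Matrix.det (Matrix.of fun a b => (v a : Γ → A) (c b))) • LinearMap.id -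
            LinearMap.pi F : (Γ → A) →ₗ[A] (Γ → A)) w = - ∑ a : Fin k,
              ((-1) ^ ((a.succ : Fin (k+1)) : ℕ) * Matrix.det ((Matrix.of fun i b =>
          (Fin.cons w (fun a => (v a : Γ → A)) : Fin (k+1) → Γ → A) i (c b)).submatrix
            a.succ.succAbove id)) • (v a : Γ → A) := by
          ext γ
          simp only [LinearMap.sub_apply, LinearMap.smul_apply, LinearMap.id_apply, Pi.sub_apply,
            LinearMap.pi_apply, Pi.smul_apply, Pi.neg_apply, Finset.sum_apply, smul_eq_mul]
          rw [hF, Matrix.det_succ_column_zero, Fin.sum_univ_succ]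
          have e1 : ((Matrix.of fun i b =>
              (Fin.cons w (fun a => (v a : Γ → A)) : Fin (k+1) → Γ → A) i
              ((Fin.cons γ c : Fin (k+1) → Γ) b)).submatrix (Fin.succAbove 0) Fin.succ) =
              (Matrix.of fun a b => (v a : Γ → A) (c b)) := by
            ext a b
            simp
          rw [e1]
          have e2 : ∀ a : Fin k, ((Matrix.of fun i b =>
              (Fin.cons w (fun a => (v a : Γ → A)) : Fin (k+1) → Γ → A) i
              ((Fin.cons γ c : Fin (k+1) → Γ) b)).submatrix (Fin.succAbove a.succ) Fin.succ) =
              ((Matrix.of fun i b =>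
          (Fin.cons w (fun a => (v a : Γ → A)) : Fin (k+1) → Γ → A) i (c b)).submatrix
            a.succ.succAbove id) := by
            intro a
            ext i b
            simp
          simp only [e2, Matrix.of_apply, Fin.cons_zero, Fin.cons_succ]
          have e3 : ∀ a : Fin k, ∀ D : A, (-1 : A) ^ ((a.succ : Fin (k+1)) : ℕ) * (v a : Γ → A) γ * D
            = (-1 : A) ^ ((a.succ : Fin (k+1)) : ℕ) * D * (v a : Γ → A) γ := fun a D => by ring
          simp only [e3]
          simp only [Fin.val_zero, pow_zero, one_mul]
          ring
        rw [this]
        exact neg_mem (sum_mem fun a _ => N.smul_mem _ (v a).2)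
      · ext γ
        have := hdet0 (Fin.cons ⟨w, hw⟩ v) (Fin.cons γ c)
        have h0 : F γ w = 0 := by
          rw [hF, ← this]
          congr 1
          ext i b
          refine Fin.cases ?_ (fun i => ?_) i <;> simp
        simp [h0]
    · exact ⟨0, fun a => by simp, fun a _ => by simp⟩
    · rintro x y _ _ ⟨P, h1, h2⟩ ⟨Q, h3, h4⟩
      refine ⟨P + Q, fun a => add_mem (h1 a) (h3 a), fun a ha => ?_⟩
      rw [LinearMap.add_apply, h2 a ha, h4 a ha, add_smul]
    · rintro r x _ ⟨P, h1, h2⟩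
      refine ⟨r • P, fun a => N.smul_mem _ (h1 a), fun a ha => ?_⟩
      rw [LinearMap.smul_apply, h2 a ha, smul_smul, smul_eq_mul]
  obtain ⟨P, h1, h2⟩ := key 1 (hone ▸ Submodule.mem_top)
  exact ⟨P, h1, fun a ha => by rw [h2 a ha, one_smul]⟩

theorem DiffSimple.nontrivial {A : Type*} [CommRing A] {φ : A →+* A} (h : DiffSimple φ) :
    Nontrivial A := by
  by_contra hn
  rw [not_nontrivial_iff_subsingleton] at hn
  exact h.1 (Subsingleton.elim _ _)

theorem DiffSimple.injective {A B : Type*} [CommRing A] [CommRing B] [Nontrivial B]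
    {φ : A →+* A} (h : DiffSimple φ) {ψ : B →+* B} (j : A →+* B)
    (hj : ∀ a, ψ (j a) = j (φ a)) : Function.Injective j := by
  rw [RingHom.injective_iff_ker_eq_bot]
  refine (h.2 (RingHom.ker j) fun x hx => ?_).resolve_right (RingHom.ker_ne_top j)
  rw [RingHom.mem_ker] at hx ⊢
  rw [← hj, hx, map_zero]

/-- The scalar extension along `s` of a linear functional on polynomials. -/
noncomputable def MvPolynomial.extendFunctional {V A C : Type*} [CommRing A] [CommRing C]
    (s : A →+* C) (G : MvPolynomial V A →ₗ[A] A) : MvPolynomial V C →ₗ[C] C :=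
  (MvPolynomial.basisMonomials V C).constr C fun m => s (G (MvPolynomial.monomial m 1))

theorem MvPolynomial.extendFunctional_map {V A C : Type*} [CommRing A] [CommRing C]
    (s : A →+* C) (G : MvPolynomial V A →ₗ[A] A) (f : MvPolynomial V A) :
    MvPolynomial.extendFunctional s G (MvPolynomial.map s f) = s (G f) := by
  induction f using MvPolynomial.induction_on' with
  | monomial m a =>
    have h1 : MvPolynomial.monomial m (s a) =
        s a • MvPolynomial.basisMonomials V C m := by
      rw [MvPolynomial.coe_basisMonomials, MvPolynomial.smul_monomial, smul_eq_mul, mul_one]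
    have h2 : MvPolynomial.monomial m a = a • (MvPolynomial.monomial m 1 : MvPolynomial V A) := by
      rw [MvPolynomial.smul_monomial, smul_eq_mul, mul_one]
    rw [MvPolynomial.map_monomial, h1, map_smul, MvPolynomial.extendFunctional,
      Module.Basis.constr_basis, h2, map_smul, smul_eq_mul, smul_eq_mul, map_mul]
  | add p q hp hq => simp only [map_add, hp, hq]

theorem exists_degree_bound_of_mem_map {V A B C : Type*} [CommRing A] [CommRing B] [CommRing C]
    (j : A →+* B) (x : V → B) (s : A →+* C) {q : MvPolynomial V C}
    (hq : q ∈ (RingHom.ker (MvPolynomial.eval₂Hom j x)).map (MvPolynomial.map s)) :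
    ∃ N : ℕ, ∀ G : MvPolynomial V A →ₗ[A] A,
      (∀ f, f.totalDegree ≤ N → MvPolynomial.eval₂Hom j x f = 0 → G f = 0) →
      MvPolynomial.extendFunctional s G q = 0 := by
  suffices H : ∀ a : MvPolynomial V C, ∃ N : ℕ, ∀ G : MvPolynomial V A →ₗ[A] A,
      (∀ f, f.totalDegree ≤ N → MvPolynomial.eval₂Hom j x f = 0 → G f = 0) →
      MvPolynomial.extendFunctional s G (a * q) = 0 by
    simpa using H 1
  refine Submodule.span_induction ?_ ?_ ?_ ?_ hq
  · rintro _ ⟨f, hf, rfl⟩ a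
    induction a using MvPolynomial.induction_on' with
    | monomial m c =>
      refine ⟨(MvPolynomial.monomial m 1 * f).totalDegree, fun G hG => ?_⟩
      have : MvPolynomial.monomial m c * MvPolynomial.map s f =
          c • MvPolynomial.map s (MvPolynomial.monomial m 1 * f) := by
        rw [map_mul, MvPolynomial.map_monomial, ← smul_mul_assoc, MvPolynomial.smul_monomial,
          map_one, smul_eq_mul, mul_one]
      rw [this, map_smul, MvPolynomial.extendFunctional_map, hG _ le_rfl, map_zero, smul_zero]
      rw [map_mul, RingHom.mem_ker.1 hf, mul_zero]
    | add p p' hp hp' =>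
      obtain ⟨N, hN⟩ := hp
      obtain ⟨N', hN'⟩ := hp'
      refine ⟨max N N', fun G hG => ?_⟩
      rw [add_mul, map_add, hN G fun f hf => hG f (hf.trans (le_max_left _ _)),
        hN' G fun f hf => hG f (hf.trans (le_max_right _ _)), add_zero]
  · exact fun a => ⟨0, fun G _ => by simp⟩
  · intro x y _ _ hx hy a
    obtain ⟨N, hN⟩ := hx a
    obtain ⟨N', hN'⟩ := hy a
    refine ⟨max N N', fun G hG => ?_⟩
    rw [mul_add, map_add, hN G fun f hf => hG f (hf.trans (le_max_left _ _)),
      hN' G fun f hf => hG f (hf.trans (le_max_right _ _)), add_zero]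
  · intro b x _ hx a
    obtain ⟨N, hN⟩ := hx (a * b)
    exact ⟨N, fun G hG => by rw [smul_eq_mul, ← mul_assoc, hN G hG]⟩

theorem exists_word_prod_eq {V B : Type*} [CommRing B] (x : V → B) (N : ℕ) :
    ∀ m : V →₀ ℕ, m.degree ≤ N → ∃ f : Fin N → Option V,
      (∏ i, (f i).elim 1 x) = m.prod fun v e => x v ^ e := by
  classical
  induction N with
  | zero =>
    intro m hm
    have : m = 0 := by simpa [Finsupp.degree_eq_zero_iff] using hm
    exact ⟨Fin.elim0, by simp [this]⟩
  | succ N ih =>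
    intro m hm
    by_cases h0 : m = 0
    · exact ⟨fun _ => none, by simp [h0]⟩
    · obtain ⟨v, hv⟩ := Finsupp.ne_iff.1 h0
      have hm' : m = Finsupp.single v 1 + (m - Finsupp.single v 1) := by
        rw [add_tsub_cancel_of_le]
        rw [Finsupp.single_le_iff]
        exact Nat.one_le_iff_ne_zero.2 hv
      obtain ⟨f, hf⟩ := ih (m - Finsupp.single v 1) (by
        rw [hm'] at hm
        rw [map_add, Finsupp.degree_single] at hm
        omega)
      refine ⟨Fin.cons (some v) f, ?_⟩
      rw [Fin.prod_univ_succ, hm', Finsupp.prod_add_index' (by simp) (by simp [pow_add]),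
        Finsupp.prod_single_index (by simp)]
      simp [hf]

/-- A family spanning a finite étale difference module over a `φ`-simple ring `A` admits a
retraction of its span onto `A`. -/
theorem exists_retraction {A B Γ : Type*} [CommRing A] [CommRing B] [Nontrivial B] [Fintype Γ]
    [DecidableEq Γ] {φ : A →+* A} (hφ : DiffSimple φ) {ψ : B →+* B} {j : A →+* B}
    (hj : ∀ a, ψ (j a) = j (φ a)) {M M' : Matrix Γ Γ A} (hM : M * M' = 1) {g : Γ → B}
    (hg : ∀ γ, ψ (g γ) = ∑ δ, j (M γ δ) * g δ) :
    ∃ G : (Γ → A) →ₗ[A] A, ∀ a r, ∑ γ, j (a γ) * g γ = j r → G a = r := by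
  have hinj := hφ.injective j hj
  let N : Submodule A (Γ → A) :=
    { carrier := {a | ∃ r, ∑ γ, j (a γ) * g γ = j r}
      add_mem' := by
        rintro a b ⟨r, hr⟩ ⟨t, ht⟩
        exact ⟨r + t, by simp [add_mul, Finset.sum_add_distrib, hr, ht]⟩
      zero_mem' := ⟨0, by simp⟩
      smul_mem' := by
        rintro c a ⟨r, hr⟩
        exact ⟨c * r, by simp [mul_assoc, ← Finset.mul_sum, hr]⟩ }
  have hN : ∀ a ∈ N, Matrix.vecMul (fun γ => φ (a γ)) M ∈ N := by
    rintro a ⟨r, hr⟩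
    refine ⟨φ r, ?_⟩
    rw [← hj, ← hr, map_sum]
    simp only [Matrix.vecMul, dotProduct, map_sum, map_mul, hg, hj, Finset.mul_sum, Finset.sum_mul]
    rw [Finset.sum_comm]
    simp only [mul_assoc]
  obtain ⟨P, hP, hP'⟩ := exists_projection_of_stable hφ hM N hN
  choose ℓ hℓ using fun a : N => a.2
  let L : N →ₗ[A] A :=
    { toFun := ℓ
      map_add' := fun a b => hinj (by
        rw [← hℓ, map_add, ← hℓ, ← hℓ]
        simp [add_mul, Finset.sum_add_distrib])
      map_smul' := fun c a => hinj (by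
        rw [← hℓ, smul_eq_mul, map_mul, RingHom.id_apply, ← hℓ]
        simp [mul_assoc, ← Finset.mul_sum]) }
  refine ⟨L ∘ₗ P.codRestrict N hP, fun a r har => hinj ?_⟩
  have ha : a ∈ N := ⟨r, har⟩
  have : P.codRestrict N hP a = ⟨a, ha⟩ := Subtype.ext (hP' a ha)
  rw [LinearMap.comp_apply, this, ← har]
  exact (hℓ ⟨a, ha⟩).symm

theorem exists_functional {V A B C : Type*} [Fintype V] [CommRing A] [CommRing B] [CommRing C]
    [Nontrivial B] {φ : A →+* A} (hφ : DiffSimple φ) {ψ : B →+* B} {j : A →+* B}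
    (hj : ∀ a, ψ (j a) = j (φ a)) [DecidableEq V] {M M' : Matrix V V A} (hM : M * M' = 1)
    {x : V → B} (hx : ∀ v, ψ (x v) = ∑ w, j (M v w) * x w) (s : A →+* C)
    {q : MvPolynomial V C}
    (hq : q ∈ (RingHom.ker (MvPolynomial.eval₂Hom j x)).map (MvPolynomial.map s)) :
    ∃ G : MvPolynomial V A →ₗ[A] A, G 1 = 1 ∧ MvPolynomial.extendFunctional s G q = 0 := by
  obtain ⟨N, hN⟩ := exists_degree_bound_of_mem_map j x s hq
  let ext : Matrix V V A → Matrix (Option V) (Option V) A := fun M =>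
    Matrix.of fun v w => v.elim (w.elim 1 fun _ => 0) fun v => w.elim 0 fun w => M v w
  have hext : ∀ v w, ∑ u, ext M v u * ext M' u w = if v = w then 1 else 0 := by
    intro v w
    rw [Fintype.sum_option]
    rcases v with _ | v <;> rcases w with _ | w <;> simp [ext]
    have := congrFun (congrFun hM v) w
    rwa [Matrix.mul_apply, Matrix.one_apply] at this
  let pow : Matrix V V A → Matrix (Fin N → Option V) (Fin N → Option V) A :=
    fun M => Matrix.of fun f g => ∏ i, ext M (f i) (g i)
  have hpow : pow M * pow M' = 1 := by
    ext f h
    simp only [Matrix.mul_apply, pow, Matrix.of_apply, ← Finset.prod_mul_distrib]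
    rw [← Fintype.piFinset_univ,
      ← Finset.prod_univ_sum (fun _ => Finset.univ) fun i u => ext M (f i) u * ext M' u (h i)]
    simp only [hext, Matrix.one_apply, Finset.prod_ite_zero]
    simp [funext_iff]
  let g : (Fin N → Option V) → B := fun f => ∏ i, (f i).elim 1 x
  have hg : ∀ f, ψ (g f) = ∑ h, j (pow M f h) * g h := by
    intro f
    simp only [g, pow, Matrix.of_apply, map_prod, ← Finset.prod_mul_distrib]
    rw [← Fintype.piFinset_univ,
      ← Finset.prod_univ_sum (fun _ => Finset.univ)
        fun i u => j (ext M (f i) u) * (u.elim 1 x)]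
    refine Finset.prod_congr rfl fun i _ => ?_
    rw [Fintype.sum_option]
    rcases f i with _ | v <;> simp [ext, hx]
  obtain ⟨G₀, hG₀⟩ := exists_retraction hφ hj hpow hg
  choose! F hF using exists_word_prod_eq x N
  let T : MvPolynomial V A →ₗ[A] ((Fin N → Option V) → A) :=
    (MvPolynomial.basisMonomials V A).constr A fun m => Pi.single (F m) 1
  have hT : ∀ f : MvPolynomial V A, f.totalDegree ≤ N →
      ∑ γ, j (T f γ) * g γ = MvPolynomial.eval₂Hom j x f := by
    intro f hf
    have : T f = ∑ m ∈ f.support, f.coeff m • (Pi.single (F m) 1 : (Fin N → Option V) → A) := by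
      rw [Module.Basis.constr_apply]
      rfl
    rw [this, MvPolynomial.coe_eval₂Hom, MvPolynomial.eval₂_eq']
    simp only [Finset.sum_apply, map_sum, Finset.sum_mul]
    rw [Finset.sum_comm]
    refine Finset.sum_congr rfl fun m hm => ?_
    rw [Finset.sum_eq_single (F m) (fun b _ hb => by simp [hb]) (by simp)]
    have := hF m ((MvPolynomial.le_totalDegree hm).trans hf)
    simp only [Pi.smul_apply, Pi.single_eq_same, smul_eq_mul, mul_one, g, this]
    rw [Finsupp.prod_fintype _ _ (by simp)]
  refine ⟨G₀ ∘ₗ T, hG₀ _ _ ?_, hN _ fun f hf hf0 => hG₀ _ _ ?_⟩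
  · rw [hT _ (by simp), map_one, map_one]
  · rw [hT _ hf, hf0, map_zero]

/-- An ideal that is maximal among the proper `φ`-ideals. -/
def IsMaximalStable {R : Type*} [CommRing R] (φ : R →+* R) (m : Ideal R) : Prop :=
  m ≠ ⊤ ∧ (∀ x ∈ m, φ x ∈ m) ∧
    ∀ J : Ideal R, (∀ x ∈ J, φ x ∈ J) → m ≤ J → J = m ∨ J = ⊤

theorem Ideal.span_stable {R : Type*} [CommRing R] {φ : R →+* R} {s : Set R}
    (h : ∀ x ∈ s, φ x ∈ Ideal.span s) : ∀ x ∈ Ideal.span s, φ x ∈ Ideal.span s := by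
  have : Ideal.span s ≤ (Ideal.span s).comap φ := Ideal.span_le.2 h
  exact this

theorem exists_isMaximalStable {R : Type*} [CommRing R] {φ : R →+* R} {I : Ideal R}
    (hI : ∀ x ∈ I, φ x ∈ I) (h1 : I ≠ ⊤) : ∃ m, I ≤ m ∧ IsMaximalStable φ m := by
  obtain ⟨m, hIm, hm⟩ := zorn_le_nonempty₀ {J : Ideal R | (∀ x ∈ J, φ x ∈ J) ∧ J ≠ ⊤}
    (fun c hc hchain J hJ => by
      refine ⟨sSup c, ⟨fun x hx => ?_, ?_⟩, fun z hz => le_sSup hz⟩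
      · rw [Submodule.mem_sSup_of_directed ⟨J, hJ⟩ hchain.directedOn] at hx ⊢
        obtain ⟨J', hJ', hx⟩ := hx
        exact ⟨J', hJ', (hc hJ').1 x hx⟩
      · rw [Ne, Ideal.eq_top_iff_one, Submodule.mem_sSup_of_directed ⟨J, hJ⟩ hchain.directedOn]
        rintro ⟨J', hJ', hx⟩
        exact (hc hJ').2 ((Ideal.eq_top_iff_one _).2 hx)) I ⟨hI, h1⟩
  refine ⟨m, hIm, hm.1.2, hm.1.1, fun J hJ hmJ => ?_⟩
  by_cases hJ1 : J = ⊤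
  · exact Or.inr hJ1
  · exact Or.inl (le_antisymm (hm.2 ⟨hJ, hJ1⟩ hmJ) hmJ)

theorem IsMaximalStable.diffSimple_of_surjective {R B : Type*} [CommRing R] [CommRing B]
    [Nontrivial B] {φ : R →+* R} {m : Ideal R} (hm : IsMaximalStable φ m) {ψ : B →+* B}
    {f : R →+* B} (hf : Function.Surjective f) (hψ : ∀ x, ψ (f x) = f (φ x))
    (hker : m ≤ RingHom.ker f) : DiffSimple ψ := by
  have hst : ∀ I : Ideal B, (∀ x ∈ I, ψ x ∈ I) → I.comap f = m ∨ I.comap f = ⊤ := by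
    intro I hI
    refine hm.2.2 _ (fun x hx => ?_) (hker.trans (Ideal.comap_mono bot_le))
    rw [Ideal.mem_comap, ← hψ]
    exact hI _ hx
  refine ⟨bot_ne_top, fun I hI => ?_⟩
  rcases hst I hI with h | h
  · left
    rw [eq_bot_iff]
    intro y hy
    obtain ⟨x, rfl⟩ := hf y
    have : x ∈ m := h ▸ hy
    exact hker this
  · right
    rw [Ideal.eq_top_iff_one]
    have : (1 : R) ∈ I.comap f := h ▸ Submodule.mem_top
    simpa using this

section Tower

variable {K V : Type*} [Field K]

/-- The difference operator on the universal ring in the indeterminates `X (i, v)` for which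
`X i` solves the `i`-th `σ`-transform of the system with matrix `B`. -/
noncomputable def towerPhi [Fintype V] (φ σ : K →+* K) (B : Matrix V V K) :
    MvPolynomial (ℕ × V) K →+* MvPolynomial (ℕ × V) K :=
  MvPolynomial.eval₂Hom (MvPolynomial.C.comp φ) fun p =>
    ∑ w, MvPolynomial.C ((σ ^ p.1) (B p.2 w)) * MvPolynomial.X (p.1, w)

/-- The shift `X (i, v) ↦ X (i + 1, v)` acting by `σ` on coefficients. -/
noncomputable def towerSigma (V : Type*) (σ : K →+* K) :
    MvPolynomial (ℕ × V) K →+* MvPolynomial (ℕ × V) K :=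
  MvPolynomial.eval₂Hom (MvPolynomial.C.comp σ) fun p => MvPolynomial.X (p.1 + 1, p.2)

/-- The substitution of `0` for the indeterminates of level at least `d`. -/
noncomputable def towerTrunc (K V : Type*) [Field K] (d : ℕ) :
    MvPolynomial (ℕ × V) K →+* MvPolynomial (ℕ × V) K :=
  MvPolynomial.eval₂Hom MvPolynomial.C fun p => if p.1 < d then MvPolynomial.X p else 0

@[simp] theorem towerPhi_C [Fintype V] (φ σ : K →+* K) (B : Matrix V V K) (a : K) :
    towerPhi φ σ B (MvPolynomial.C a) = MvPolynomial.C (φ a) := by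
  simp [towerPhi]

@[simp] theorem towerPhi_X [Fintype V] (φ σ : K →+* K) (B : Matrix V V K) (p : ℕ × V) :
    towerPhi φ σ B (MvPolynomial.X p) =
      ∑ w, MvPolynomial.C ((σ ^ p.1) (B p.2 w)) * MvPolynomial.X (p.1, w) := by
  simp [towerPhi]

@[simp] theorem towerSigma_C (σ : K →+* K) (a : K) :
    towerSigma V σ (MvPolynomial.C a) = MvPolynomial.C (σ a) := by
  simp [towerSigma]

@[simp] theorem towerSigma_X (σ : K →+* K) (p : ℕ × V) :
    towerSigma V σ (MvPolynomial.X p) = MvPolynomial.X (p.1 + 1, p.2) := by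
  simp [towerSigma]

@[simp] theorem towerTrunc_C (d : ℕ) (a : K) :
    towerTrunc K V d (MvPolynomial.C a) = MvPolynomial.C a := by
  simp [towerTrunc]

@[simp] theorem towerTrunc_X (d : ℕ) (p : ℕ × V) :
    towerTrunc K V d (MvPolynomial.X p) = if p.1 < d then MvPolynomial.X p else 0 := by
  simp [towerTrunc]

theorem towerPhi_towerSigma [Fintype V] {φ σ : K →+* K} (hcomm : φ.comp σ = σ.comp φ) (B : Matrix V V K)
    (f : MvPolynomial (ℕ × V) K) :
    towerPhi φ σ B (towerSigma V σ f) = towerSigma V σ (towerPhi φ σ B f) := by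
  suffices H : (towerPhi φ σ B).comp (towerSigma V σ) =
      (towerSigma V σ).comp (towerPhi φ σ B) from congrArg (fun g => g f) H
  refine MvPolynomial.ringHom_ext (fun a => ?_) fun p => ?_
  · simpa using congrArg (fun g => g a) hcomm
  · simp [pow_succ']

theorem towerPhi_towerTrunc [Fintype V] (φ σ : K →+* K) (B : Matrix V V K) (d : ℕ)
    (f : MvPolynomial (ℕ × V) K) :
    towerPhi φ σ B (towerTrunc K V d f) = towerTrunc K V d (towerPhi φ σ B f) := by
  suffices H : (towerPhi φ σ B).comp (towerTrunc K V d) =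
      (towerTrunc K V d).comp (towerPhi φ σ B) from congrArg (fun g => g f) H
  refine MvPolynomial.ringHom_ext (fun a => ?_) fun p => ?_
  · simp
  · by_cases h : p.1 < d <;> simp [h]

/-- The `d`-th stage of the tower: a maximal difference ideal of the universal ring that
contains the indeterminates of level at least `d`. -/
def IsStage [Fintype V] (φ σ : K →+* K) (B : Matrix V V K) (d : ℕ) (m : Ideal (MvPolynomial (ℕ × V) K)) :
    Prop :=
  IsMaximalStable (towerPhi φ σ B) m ∧ ∀ p : ℕ × V, d ≤ p.1 → MvPolynomial.X p ∈ m

/-- Compatibility of the stages `d` and `d + 1` of the tower. -/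
def IsLink (σ : K →+* K) (d : ℕ) (m m' : Ideal (MvPolynomial (ℕ × V) K)) : Prop :=
  ∀ x ∈ m, towerTrunc K V d x ∈ m' ∧ towerSigma V σ (towerTrunc K V d x) ∈ m'

theorem exists_next_stage [Fintype V] {φ σ : K →+* K} (hcomm : φ.comp σ = σ.comp φ) [DecidableEq V]
    {B B' : Matrix V V K} (hB : B * B' = 1) {d : ℕ} {m m' : Ideal (MvPolynomial (ℕ × V) K)}
    (hm : IsStage φ σ B d m) (hm' : IsStage φ σ B (d + 1) m') (hl : IsLink σ d m m') :
    ∃ m'', IsStage φ σ B (d + 2) m'' ∧ IsLink σ (d + 1) m' m'' := by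
  let φR := towerPhi φ σ B
  let σR := towerSigma V σ
  let φA : _ ⧸ m →+* _ ⧸ m := Ideal.quotientMap m φR hm.1.2.1
  let φB : _ ⧸ m' →+* _ ⧸ m' := Ideal.quotientMap m' φR hm'.1.2.1
  have : Nontrivial (_ ⧸ m) := Ideal.Quotient.nontrivial_iff.2 hm.1.1
  have : Nontrivial (_ ⧸ m') := Ideal.Quotient.nontrivial_iff.2 hm'.1.1
  have hφA : DiffSimple φA := hm.1.diffSimple_of_surjective (f := Ideal.Quotient.mk m)
    Ideal.Quotient.mk_surjective (fun x => rfl) (Ideal.mk_ker).ge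
  let j : _ ⧸ m →+* _ ⧸ m' := Ideal.quotientMap m' (towerTrunc K V d) fun x hx => (hl x hx).1
  let s : _ ⧸ m →+* _ ⧸ m' :=
    Ideal.quotientMap m' (σR.comp (towerTrunc K V d)) fun x hx => (hl x hx).2
  have hjm : ∀ y, j (Ideal.Quotient.mk m y) = Ideal.Quotient.mk m' (towerTrunc K V d y) :=
    fun y => rfl
  have hsm : ∀ y, s (Ideal.Quotient.mk m y) =
      Ideal.Quotient.mk m' (σR (towerTrunc K V d y)) := fun y => rfl
  have hj : ∀ a, φB (j a) = j (φA a) := by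
    intro a
    obtain ⟨a, rfl⟩ := Ideal.Quotient.mk_surjective a
    exact congrArg (Ideal.Quotient.mk m') (towerPhi_towerTrunc φ σ B d a)
  let c : K →+* _ ⧸ m := (Ideal.Quotient.mk m).comp (MvPolynomial.C.comp (σ ^ d))
  have hM : c.mapMatrix B * c.mapMatrix B' = 1 := by
    rw [← map_mul, hB, map_one]
  let x : V → _ ⧸ m' := fun v => Ideal.Quotient.mk m' (MvPolynomial.X (d, v))
  have hx : ∀ v, φB (x v) = ∑ w, j (c.mapMatrix B v w) * x w := by
    intro v
    have : φB (x v) = Ideal.Quotient.mk m' (φR (MvPolynomial.X (d, v))) := rfl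
    rw [this]
    simp only [φR, towerPhi_X, map_sum, map_mul]
    refine Finset.sum_congr rfl fun w _ => ?_
    congr 1
    simp [hjm, c]
  let I := (RingHom.ker (MvPolynomial.eval₂Hom j x)).map (MvPolynomial.map s)
  have hI : I ≠ ⊤ := by
    intro h
    obtain ⟨G, hG1, hG0⟩ := exists_functional hφA hj hM hx s
      (q := 1) (show (1 : MvPolynomial V (_ ⧸ m')) ∈ I from h ▸ Submodule.mem_top)
    have := MvPolynomial.extendFunctional_map s G 1
    rw [map_one, hG0, hG1, map_one] at this
    exact zero_ne_one this
  let Ψ : MvPolynomial (ℕ × V) K →+* MvPolynomial V (_ ⧸ m') :=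
    MvPolynomial.eval₂Hom (MvPolynomial.C.comp ((Ideal.Quotient.mk m').comp MvPolynomial.C))
      fun p => if p.1 ≤ d then MvPolynomial.C (Ideal.Quotient.mk m' (MvPolynomial.X p)) else
        if p.1 = d + 1 then MvPolynomial.X p.2 else 0
  let h : MvPolynomial (ℕ × V) K →+* MvPolynomial V (_ ⧸ m) :=
    MvPolynomial.eval₂Hom (MvPolynomial.C.comp ((Ideal.Quotient.mk m).comp MvPolynomial.C))
      fun p => if p.1 < d then MvPolynomial.C (Ideal.Quotient.mk m (MvPolynomial.X p)) else
        if p.1 = d then MvPolynomial.X p.2 else 0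
  have hh : (MvPolynomial.eval₂Hom j x).comp h = Ideal.Quotient.mk m' := by
    refine MvPolynomial.ringHom_ext (fun a => ?_) fun p => ?_
    · simp [h, hjm]
    · rcases lt_trichotomy p.1 d with hp | hp | hp
      · simp [h, hp, hjm]
      · subst hp
        simp [h, x]
      · have : Ideal.Quotient.mk m' (MvPolynomial.X p) = 0 :=
          Ideal.Quotient.eq_zero_iff_mem.2 (hm'.2 p hp)
        simp [h, hp.ne', hp.not_gt, this]
  have hΨ1 : Ψ.comp (towerTrunc K V (d + 1)) = MvPolynomial.C.comp (Ideal.Quotient.mk m') := by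
    refine MvPolynomial.ringHom_ext (fun a => ?_) fun p => ?_
    · simp [Ψ]
    · rcases lt_or_ge p.1 (d + 1) with hp | hp
      · simp [Ψ, hp, Nat.lt_succ_iff.1 hp]
      · have : Ideal.Quotient.mk m' (MvPolynomial.X p) = 0 :=
          Ideal.Quotient.eq_zero_iff_mem.2 (hm'.2 p hp)
        simp [hp.not_gt, this]
  have hΨ2 : Ψ.comp (σR.comp (towerTrunc K V (d + 1))) = (MvPolynomial.map s).comp h := by
    refine MvPolynomial.ringHom_ext (fun a => ?_) fun p => ?_
    · simp [Ψ, h, hsm, σR]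
    · rcases lt_trichotomy p.1 d with hp | hp | hp
      · have hp1 : p.1 < d + 1 := by omega
        have hp2 : p.1 + 1 ≤ d := by omega
        simp [Ψ, h, hp, hsm, σR, hp1, hp2]
      · have hp1 : p.1 < d + 1 := by omega
        simp [Ψ, h, σR, hp]
      · have hp1 : ¬ p.1 < d + 1 := by omega
        simp [h, hp.ne', hp.not_gt, hp1]
  let gens : Set (MvPolynomial (ℕ × V) K) :=
    {y | ∃ z ∈ m', y = towerTrunc K V (d + 1) z} ∪
    {y | ∃ z ∈ m', y = σR (towerTrunc K V (d + 1) z)} ∪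
    {y | ∃ p : ℕ × V, d + 2 ≤ p.1 ∧ y = MvPolynomial.X p}
  have hst : ∀ y ∈ Ideal.span gens, φR y ∈ Ideal.span gens := by
    refine Ideal.span_stable ?_
    rintro _ ((⟨z, hz, rfl⟩ | ⟨z, hz, rfl⟩) | ⟨p, hp, rfl⟩)
    · refine Ideal.subset_span (Or.inl (Or.inl ⟨φR z, hm'.1.2.1 z hz, ?_⟩))
      exact towerPhi_towerTrunc _ _ _ _ _
    · refine Ideal.subset_span (Or.inl (Or.inr ⟨φR z, hm'.1.2.1 z hz, ?_⟩))
      simp only [φR, σR]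
      rw [towerPhi_towerSigma hcomm, towerPhi_towerTrunc]
    · simp only [φR, towerPhi_X]
      exact Ideal.sum_mem _ fun w _ => Ideal.mul_mem_left _ _
        (Ideal.subset_span (Or.inr ⟨(p.1, w), hp, rfl⟩))
  have htop : Ideal.span gens ≠ ⊤ := by
    have hle : Ideal.span gens ≤ I.comap Ψ := by
      rw [Ideal.span_le]
      rintro _ ((⟨z, hz, rfl⟩ | ⟨z, hz, rfl⟩) | ⟨p, hp, rfl⟩)
      · change Ψ (towerTrunc K V (d + 1) z) ∈ I
        have := congrArg (fun g => g z) hΨ1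
        simp only [RingHom.comp_apply] at this
        rw [this, Ideal.Quotient.eq_zero_iff_mem.2 hz, map_zero]
        exact zero_mem _
      · change Ψ (σR (towerTrunc K V (d + 1) z)) ∈ I
        have := congrArg (fun g => g z) hΨ2
        simp only [RingHom.comp_apply] at this
        rw [this]
        refine Ideal.mem_map_of_mem _ ?_
        have h2 := congrArg (fun g => g z) hh
        simp only [RingHom.comp_apply] at h2
        rw [RingHom.mem_ker, h2, Ideal.Quotient.eq_zero_iff_mem.2 hz]
      · change Ψ (MvPolynomial.X p) ∈ I
        have hp1 : ¬ p.1 ≤ d := by omega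
        have hp2 : p.1 ≠ d + 1 := by omega
        simp [Ψ, hp1, hp2]
    intro h1
    rw [h1, top_le_iff, Ideal.comap_eq_top_iff] at hle
    exact hI hle
  obtain ⟨m'', hle, hm''⟩ := exists_isMaximalStable hst htop
  refine ⟨m'', ⟨hm'', fun p hp => hle (Ideal.subset_span (Or.inr ⟨p, hp, rfl⟩))⟩,
    fun z hz => ⟨hle (Ideal.subset_span (Or.inl (Or.inl ⟨z, hz, rfl⟩))),
      hle (Ideal.subset_span (Or.inl (Or.inr ⟨z, hz, rfl⟩)))⟩⟩

end Tower

/-- The subalgebra generated by the first `d` levels of a tower. -/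
def stageAlg (K : Type*) {V S : Type*} [Field K] [CommRing S] [Algebra K S] (x : ℕ → V → S)
    (d : ℕ) : Subalgebra K S :=
  Algebra.adjoin K {y | ∃ i < d, ∃ v, y = x i v}

/-- A `φσ`-algebra generated by a `σ`-orbit of solutions of a linear system, all of whose finite
stages are `φ`-simple. -/
structure IsSimpleTower {K V S : Type*} [Field K] [Fintype V] [CommRing S] [Algebra K S]
    (φ σ : K →+* K) (B : Matrix V V K) (Φ τ : S →+* S) (x : ℕ → V → S) : Prop where
  comm : ∀ a, Φ (τ a) = τ (Φ a)
  phi_algebraMap : ∀ a, Φ (algebraMap K S a) = algebraMap K S (φ a)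
  sigma_algebraMap : ∀ a, τ (algebraMap K S a) = algebraMap K S (σ a)
  sigma_gen : ∀ d v, τ (x d v) = x (d + 1) v
  phi_gen : ∀ d v, Φ (x d v) = ∑ w, algebraMap K S ((σ ^ d) (B v w)) * x d w
  exists_mem_stage : ∀ a, ∃ d, a ∈ stageAlg K x d
  simple_stage : ∀ d, ∃ φd : stageAlg K x d →+* stageAlg K x d,
    (∀ a, (φd a : S) = Φ a) ∧ DiffSimple φd

theorem gen_mem_stageAlg (K : Type*) {V S : Type*} [Field K] [CommRing S] [Algebra K S]
    (x : ℕ → V → S) {i d : ℕ} (h : i < d) (v : V) : x i v ∈ stageAlg K x d :=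
  Algebra.subset_adjoin ⟨i, h, v, rfl⟩

theorem stageAlg_mono (K : Type*) {V S : Type*} [Field K] [CommRing S] [Algebra K S]
    (x : ℕ → V → S) : Monotone (stageAlg K x) := fun _ _ h =>
  Algebra.adjoin_mono fun _ ⟨i, hi, v, hy⟩ => ⟨i, hi.trans_le h, v, hy⟩

theorem map_mem_stageAlg {K V S : Type*} [Field K] [CommRing S] [Algebra K S] {x : ℕ → V → S}
    {τ : S →+* S} {σ : K →+* K} (h : ∀ a, τ (algebraMap K S a) = algebraMap K S (σ a))
    {d e : ℕ} (hx : ∀ i < d, ∀ v, τ (x i v) ∈ stageAlg K x e) {a : S}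
    (ha : a ∈ stageAlg K x d) : τ a ∈ stageAlg K x e := by
  induction ha using Algebra.adjoin_induction with
  | mem y hy =>
    obtain ⟨i, hi, v, rfl⟩ := hy
    exact hx i hi v
  | algebraMap r => rw [h]; exact Subalgebra.algebraMap_mem _ _
  | add a b _ _ ha hb => rw [map_add]; exact add_mem ha hb
  | mul a b _ _ ha hb => rw [map_mul]; exact mul_mem ha hb

section Tower

variable {K V : Type*} [Field K]

theorem towerTrunc_towerTrunc {d e : ℕ} (h : d ≤ e) (f : MvPolynomial (ℕ × V) K) :
    towerTrunc K V e (towerTrunc K V d f) = towerTrunc K V d f := by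
  suffices H : (towerTrunc K V e).comp (towerTrunc K V d) = towerTrunc K V d from
    congrArg (fun g => g f) H
  refine MvPolynomial.ringHom_ext (fun a => by simp) fun p => ?_
  by_cases hp : p.1 < d
  · simp [hp, hp.trans_le h]
  · simp [hp]

theorem exists_towerTrunc_eq (f : MvPolynomial (ℕ × V) K) :
    ∃ N, ∀ d ≥ N, towerTrunc K V d f = f := by
  induction f using MvPolynomial.induction_on with
  | C a => exact ⟨0, fun d _ => by simp⟩
  | add f g hf hg =>
    obtain ⟨N, hN⟩ := hf
    obtain ⟨N', hN'⟩ := hg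
    exact ⟨max N N', fun d hd => by
      rw [map_add, hN d (le_of_max_le_left hd), hN' d (le_of_max_le_right hd)]⟩
  | mul_X f p hf =>
    obtain ⟨N, hN⟩ := hf
    refine ⟨max N (p.1 + 1), fun d hd => ?_⟩
    have : p.1 < d := le_of_max_le_right hd
    rw [map_mul, hN d (le_of_max_le_left hd), towerTrunc_X, if_pos this]

theorem exists_stages [Fintype V] {φ σ : K →+* K} (hcomm : φ.comp σ = σ.comp φ) [DecidableEq V]
    {B B' : Matrix V V K} (hB : B * B' = 1) {base : Ideal (MvPolynomial (ℕ × V) K)}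
    (hbase : ∀ x ∈ base, towerPhi φ σ B x ∈ base) (hbase1 : base ≠ ⊤)
    (hX : ∀ p : ℕ × V, 1 ≤ p.1 → MvPolynomial.X p ∈ base) :
    ∃ m : ℕ → Ideal (MvPolynomial (ℕ × V) K), (∀ d, IsStage φ σ B d (m d)) ∧
      (∀ d, IsLink σ d (m d) (m (d + 1))) ∧ base ≤ m 1 := by
  let Q : ℕ → Ideal (MvPolynomial (ℕ × V) K) × Ideal (MvPolynomial (ℕ × V) K) → Prop :=
    fun d q => IsStage φ σ B d q.1 ∧ IsStage φ σ B (d + 1) q.2 ∧ IsLink σ d q.1 q.2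
  obtain ⟨m₁, hle, hm₁⟩ := exists_isMaximalStable hbase hbase1
  have hX₁ : ∀ y, towerTrunc K V 0 y = MvPolynomial.C (MvPolynomial.constantCoeff y) := fun y => by
    suffices H : towerTrunc K V 0 = MvPolynomial.C.comp MvPolynomial.constantCoeff from
      congrArg (fun g => g y) H
    exact MvPolynomial.ringHom_ext (fun a => by simp) fun p => by simp
  have hcc : ∀ y, MvPolynomial.constantCoeff (towerPhi φ σ B y) =
      φ (MvPolynomial.constantCoeff y) := fun y => by
    suffices H : MvPolynomial.constantCoeff.comp (towerPhi φ σ B) =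
      φ.comp MvPolynomial.constantCoeff from congrArg (fun g => g y) H
    exact MvPolynomial.ringHom_ext (fun a => by simp) fun p => by simp
  let m₀ : Ideal (MvPolynomial (ℕ × V) K) := RingHom.ker MvPolynomial.constantCoeff
  have hmax : m₀.IsMaximal :=
    RingHom.ker_isMaximal_of_surjective _ fun a => ⟨MvPolynomial.C a, by simp⟩
  have hm₀ : IsMaximalStable (towerPhi φ σ B) m₀ := by
    refine ⟨hmax.ne_top, fun y hy => ?_, fun J _ hJ => ?_⟩
    · rw [RingHom.mem_ker] at hy ⊢
      rw [hcc, hy, map_zero]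
    · by_cases hJ1 : J = ⊤
      · exact Or.inr hJ1
      · exact Or.inl (hmax.eq_of_le hJ1 hJ).symm
  have hq₀ : Q 0 (m₀, m₁) := by
    refine ⟨⟨hm₀, fun p _ => MvPolynomial.constantCoeff_X (R := K) p⟩,
      ⟨hm₁, fun p hp => hle (hX p hp)⟩, fun y hy => ?_⟩
    rw [hX₁, show MvPolynomial.constantCoeff y = 0 from hy]
    simp
  have hstep : ∀ d q, Q d q → ∃ q', Q (d + 1) q' ∧ q'.1 = q.2 := by
    rintro d ⟨m, m'⟩ ⟨h1, h2, h3⟩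
    obtain ⟨m'', h4, h5⟩ := exists_next_stage hcomm hB h1 h2 h3
    exact ⟨(m', m''), ⟨h2, h4, h5⟩, rfl⟩
  choose! nxt hnxt using hstep
  let seq : ℕ → Ideal (MvPolynomial (ℕ × V) K) × Ideal (MvPolynomial (ℕ × V) K) :=
    fun d => Nat.rec (m₀, m₁) (fun d q => nxt d q) d
  have hseq : ∀ d, Q d (seq d) := fun d => by
    induction d with
    | zero => exact hq₀
    | succ d ih => exact (hnxt d _ ih).1
  have hseq' : ∀ d, (seq (d + 1)).1 = (seq d).2 := fun d => (hnxt d _ (hseq d)).2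
  refine ⟨fun d => (seq d).1, fun d => (hseq d).1, fun d => ?_, ?_⟩
  · change IsLink σ d (seq d).1 (seq (d + 1)).1
    rw [hseq']
    exact (hseq d).2.2
  · change base ≤ (seq (0 + 1)).1
    rw [hseq']
    exact hle

end Tower

theorem exists_isSimpleTower.{w} {K : Type w} {V : Type} [Field K] [Fintype V] {φ σ : K →+* K}
    (hcomm : φ.comp σ = σ.comp φ) [DecidableEq V]
    {B B' : Matrix V V K} (hB : B * B' = 1) {base : Ideal (MvPolynomial (ℕ × V) K)}
    (hbase : ∀ x ∈ base, towerPhi φ σ B x ∈ base) (hbase1 : base ≠ ⊤)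
    (hX : ∀ p : ℕ × V, 1 ≤ p.1 → MvPolynomial.X p ∈ base) :
    ∃ (S : Type w) (_ : CommRing S) (_ : Algebra K S) (Φ τ : S →+* S) (x : ℕ → V → S),
      IsSimpleTower φ σ B Φ τ x ∧ ∀ r : MvPolynomial V K,
        MvPolynomial.rename (Prod.mk 0) r ∈ base → MvPolynomial.aeval (x 0) r = 0 := by
  obtain ⟨m, hm, hl, hb⟩ := exists_stages hcomm hB hbase hbase1 hX
  have hpersist : ∀ d y, y ∈ m d → towerTrunc K V d y = y → ∀ e ≥ d, y ∈ m e := by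
    intro d y hy hyd e he
    induction e, he using Nat.le_induction with
    | base => exact hy
    | succ e he ih =>
      have := (hl e y ih).1
      rwa [← hyd, towerTrunc_towerTrunc he, hyd] at this
  let M : Ideal (MvPolynomial (ℕ × V) K) :=
    { carrier := {y | ∃ N, ∀ d ≥ N, y ∈ m d}
      add_mem' := by
        rintro y z ⟨N, hN⟩ ⟨N', hN'⟩
        exact ⟨max N N', fun d hd =>
          add_mem (hN d (le_of_max_le_left hd)) (hN' d (le_of_max_le_right hd))⟩
      zero_mem' := ⟨0, fun d _ => zero_mem _⟩
      smul_mem' := by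
        rintro c y ⟨N, hN⟩
        exact ⟨N, fun d hd => Ideal.mul_mem_left _ _ (hN d hd)⟩ }
  have hM1 : M ≠ ⊤ := by
    rw [Ne, Ideal.eq_top_iff_one]
    rintro ⟨N, hN⟩
    exact (hm N).1.1 ((Ideal.eq_top_iff_one _).2 (hN N le_rfl))
  have hMφ : M ≤ M.comap (towerPhi φ σ B) := fun y ⟨N, hN⟩ =>
    ⟨N, fun d hd => (hm d).1.2.1 y (hN d hd)⟩
  have hMσ : M ≤ M.comap (towerSigma V σ) := by
    rintro y ⟨N, hN⟩
    obtain ⟨N', hN'⟩ := exists_towerTrunc_eq y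
    refine ⟨max N N' + 1, fun d hd => ?_⟩
    obtain ⟨d, rfl⟩ : ∃ c, d = c + 1 := ⟨d - 1, by omega⟩
    have := (hl d y (hN d (by omega))).2
    rwa [hN' d (by omega)] at this
  have : Nontrivial (_ ⧸ M) := Ideal.Quotient.nontrivial_iff.2 hM1
  let Φ : _ ⧸ M →+* _ ⧸ M := Ideal.quotientMap M _ hMφ
  let τ : _ ⧸ M →+* _ ⧸ M := Ideal.quotientMap M _ hMσ
  let x : ℕ → V → _ ⧸ M := fun i v => Ideal.Quotient.mk M (MvPolynomial.X (i, v))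
  have hΦ : ∀ y, Φ (Ideal.Quotient.mk M y) = Ideal.Quotient.mk M (towerPhi φ σ B y) :=
    fun _ => rfl
  have hτ : ∀ y, τ (Ideal.Quotient.mk M y) = Ideal.Quotient.mk M (towerSigma V σ y) :=
    fun _ => rfl
  have hK : ∀ a, algebraMap K (_ ⧸ M) a = Ideal.Quotient.mk M (MvPolynomial.C a) := fun _ => rfl
  have hΦK : ∀ a, Φ (algebraMap K _ a) = algebraMap K _ (φ a) := fun a => by
    rw [hK, hK, hΦ, towerPhi_C]
  have hΦx : ∀ d v, Φ (x d v) = ∑ w, algebraMap K _ ((σ ^ d) (B v w)) * x d w := fun d v => by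
    simp only [x, hΦ, towerPhi_X, hK, map_sum, map_mul]
  have hmk : ∀ y, MvPolynomial.aeval (fun p : ℕ × V => x p.1 p.2) y = Ideal.Quotient.mk M y := by
    intro y
    suffices H : MvPolynomial.aeval (fun p : ℕ × V => x p.1 p.2) = Ideal.Quotient.mkₐ K M from
      congrArg (fun g => g y) H
    exact MvPolynomial.algHom_ext fun p => by simp [x]
  refine ⟨_ ⧸ M, inferInstance, inferInstance, Φ, τ, x, ⟨?_, hΦK, fun a => ?_, fun d v => ?_, hΦx,
    fun a => ?_, fun d => ?_⟩, fun r hr => ?_⟩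
  · intro a
    obtain ⟨a, rfl⟩ := Ideal.Quotient.mk_surjective a
    rw [hτ, hΦ, hΦ, hτ, towerPhi_towerSigma hcomm]
  · rw [hK, hK, hτ, towerSigma_C]
  · simp only [x, hτ, towerSigma_X]
  · obtain ⟨a, rfl⟩ := Ideal.Quotient.mk_surjective a
    induction a using MvPolynomial.induction_on with
    | C a => exact ⟨0, Subalgebra.algebraMap_mem _ a⟩
    | add f g hf hg =>
      obtain ⟨N, hN⟩ := hf
      obtain ⟨N', hN'⟩ := hg
      exact ⟨max N N', by
        rw [map_add]
        exact add_mem (stageAlg_mono K x (le_max_left _ _) hN)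
          (stageAlg_mono K x (le_max_right _ _) hN')⟩
    | mul_X f p hf =>
      obtain ⟨N, hN⟩ := hf
      exact ⟨max N (p.1 + 1), by
        rw [map_mul]
        exact mul_mem (stageAlg_mono K x (le_max_left _ _) hN)
          (gen_mem_stageAlg K x (Nat.lt_of_succ_le (le_max_right _ _)) p.2)⟩
  · have hst : ∀ a ∈ stageAlg K x d, Φ a ∈ stageAlg K x d := fun a ha =>
      map_mem_stageAlg hΦK (fun i hi v => by
        rw [hΦx]
        exact sum_mem fun w _ => mul_mem (Subalgebra.algebraMap_mem _ _)
          (gen_mem_stageAlg K x hi w)) ha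
    let φd : stageAlg K x d →+* stageAlg K x d := Φ.restrict _ _ hst
    refine ⟨φd, fun a => rfl, ?_⟩
    let f : MvPolynomial (ℕ × V) K →ₐ[K] stageAlg K x d := MvPolynomial.aeval fun p =>
      if h : p.1 < d then ⟨x p.1 p.2, gen_mem_stageAlg K x h p.2⟩ else 0
    have hf : ∀ y, (f y : _ ⧸ M) = Ideal.Quotient.mk M (towerTrunc K V d y) := by
      intro y
      suffices H : ((stageAlg K x d).val.comp f).toRingHom =
        (Ideal.Quotient.mk M).comp (towerTrunc K V d) from congrArg (fun g => g y) H
      refine MvPolynomial.ringHom_ext (fun a => ?_) fun p => ?_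
      · simp [hK]
      · by_cases hp : p.1 < d <;> simp [f, hp, x]
    refine (hm d).1.diffSimple_of_surjective (f := f.toRingHom) ?_ (fun y => Subtype.ext ?_) ?_
    · rintro ⟨a, ha⟩
      suffices H : ∃ y, (f y : _ ⧸ M) = a by
        obtain ⟨y, hy⟩ := H
        exact ⟨y, Subtype.ext hy⟩
      induction ha using Algebra.adjoin_induction with
      | mem y hy =>
        obtain ⟨i, hi, v, rfl⟩ := hy
        exact ⟨MvPolynomial.X (i, v), by simp [f, hi]⟩
      | algebraMap r => exact ⟨MvPolynomial.C r, by simp [f]⟩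
      | add a b _ _ ha hb =>
        obtain ⟨y, rfl⟩ := ha
        obtain ⟨z, rfl⟩ := hb
        exact ⟨y + z, by simp⟩
      | mul a b _ _ ha hb =>
        obtain ⟨y, rfl⟩ := ha
        obtain ⟨z, rfl⟩ := hb
        exact ⟨y * z, by simp⟩
    · change Φ (f y : _ ⧸ M) = (f _ : _ ⧸ M)
      rw [hf, hf, hΦ, towerPhi_towerTrunc]
    · intro y hy
      rw [RingHom.mem_ker]
      refine Subtype.ext ?_
      change (f y : _ ⧸ M) = 0
      rw [hf]
      exact Ideal.Quotient.eq_zero_iff_mem.2 ⟨d + 1, fun e he =>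
        hpersist (d + 1) _ (hl d y hy).1 (towerTrunc_towerTrunc (by omega) y) e he⟩
  · have h1 : MvPolynomial.aeval (x 0) r =
        Ideal.Quotient.mk M (MvPolynomial.rename (Prod.mk 0) r) := by
      rw [← hmk, MvPolynomial.aeval_rename]
      rfl
    rw [h1]
    refine Ideal.Quotient.eq_zero_iff_mem.2 ⟨1, hpersist 1 _ (hb hr) ?_⟩
    suffices H : (towerTrunc K V 1).comp (MvPolynomial.rename (R := K) (Prod.mk 0)).toRingHom =
        (MvPolynomial.rename (Prod.mk 0)).toRingHom from congrArg (fun g => g r) H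
    exact MvPolynomial.ringHom_ext (fun a => by simp) fun p => by simp

theorem mem_span_fixed_of_stable {V S : Type*} [CommRing S] {Φ : S →+* S} (hΦ : DiffSimple Φ)
    {N : Submodule S (MvPolynomial V S)} (hN : ∀ f ∈ N, MvPolynomial.map Φ f ∈ N)
    {f : MvPolynomial V S} (hf : f ∈ N) :
    f ∈ Submodule.span S {g | g ∈ N ∧ MvPolynomial.map Φ g = g} := by
  classical
  induction hc : f.support.card using Nat.strong_induction_on generalizing f with
  | _ c ih =>
  by_cases hf0 : f = 0
  · rw [hf0]
    exact zero_mem _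
  have hex : ∃ k, ∃ g ∈ N, g ≠ 0 ∧ g.support ⊆ f.support ∧ g.support.card = k :=
    ⟨_, f, hf, hf0, subset_rfl, rfl⟩
  obtain ⟨g, hgN, hg0, hgf, hgc⟩ := Nat.find_spec hex
  obtain ⟨α, hα⟩ := MvPolynomial.support_nonempty.2 hg0
  let J : Ideal S :=
    { carrier := {c | ∃ h ∈ N, h.support ⊆ g.support ∧ h.coeff α = c}
      add_mem' := by
        rintro _ _ ⟨h, hh, hs, rfl⟩ ⟨h', hh', hs', rfl⟩
        exact ⟨h + h', add_mem hh hh',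
          MvPolynomial.support_add.trans (Finset.union_subset hs hs'), by simp⟩
      zero_mem' := ⟨0, zero_mem _, by simp, by simp⟩
      smul_mem' := by
        rintro r _ ⟨h, hh, hs, rfl⟩
        exact ⟨r • h, N.smul_mem _ hh, MvPolynomial.support_smul.trans hs, by simp⟩ }
  have hJ : J = ⊤ := by
    refine (hΦ.2 J ?_).resolve_left fun h => ?_
    · rintro _ ⟨h, hh, hs, rfl⟩
      exact ⟨_, hN h hh, (MvPolynomial.support_map_subset _ _).trans hs,
        MvPolynomial.coeff_map _ _ _⟩
    · have : g.coeff α ∈ J := ⟨g, hgN, subset_rfl, rfl⟩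
      rw [h] at this
      exact MvPolynomial.mem_support_iff.1 hα this
  obtain ⟨h, hh, hs, h1⟩ : (1 : S) ∈ J := hJ ▸ Submodule.mem_top
  have hfix : MvPolynomial.map Φ h = h := by
    by_contra hne
    have hsub : (MvPolynomial.map Φ h - h).support ⊆ g.support.erase α := by
      intro m hm
      refine Finset.mem_erase.2 ⟨?_, ?_⟩
      · rintro rfl
        rw [MvPolynomial.mem_support_iff, MvPolynomial.coeff_sub, MvPolynomial.coeff_map, h1,
          map_one, sub_self] at hm
        exact hm rfl
      · rcases Finset.mem_union.1 (MvPolynomial.support_sub _ _ _ hm) with hm | hm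
        · exact hs (MvPolynomial.support_map_subset _ _ hm)
        · exact hs hm
    refine Nat.find_min hex (m := (MvPolynomial.map Φ h - h).support.card) ?_
      ⟨_, sub_mem (hN h hh) hh, sub_ne_zero.2 hne,
        hsub.trans ((Finset.erase_subset _ _).trans hgf), rfl⟩
    rw [← hgc]
    exact (Finset.card_le_card hsub).trans_lt (Finset.card_erase_lt_of_mem hα)
  have hsub : (f - f.coeff α • h).support ⊆ f.support.erase α := by
    intro m hm
    refine Finset.mem_erase.2 ⟨?_, ?_⟩
    · rintro rfl
      rw [MvPolynomial.mem_support_iff, MvPolynomial.coeff_sub, MvPolynomial.coeff_smul, h1,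
        smul_eq_mul, mul_one, sub_self] at hm
      exact hm rfl
    · rcases Finset.mem_union.1 (MvPolynomial.support_sub _ _ _ hm) with hm | hm
      · exact hm
      · exact hgf (hs (MvPolynomial.support_smul hm))
  have := ih _ (hc ▸ (Finset.card_le_card hsub).trans_lt
    (Finset.card_erase_lt_of_mem (hgf hα))) (sub_mem hf (N.smul_mem _ hh)) rfl
  rw [← sub_add_cancel f (f.coeff α • h)]
  exact add_mem this (Submodule.smul_mem _ _ (Submodule.subset_span ⟨hh, hfix⟩))

theorem DiffSimple.isUnit_of_fixed {A : Type*} [CommRing A] {φ : A →+* A} (hφ : DiffSimple φ)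
    {c : A} (hc : φ c = c) (h0 : c ≠ 0) : IsUnit c := by
  rw [← Ideal.span_singleton_eq_top]
  refine (hφ.2 _ fun x hx => ?_).resolve_left (by simpa using h0)
  obtain ⟨y, rfl⟩ := Ideal.mem_span_singleton.1 hx
  exact Ideal.mem_span_singleton.2 ⟨φ y, by rw [map_mul, hc]⟩

theorem infinite_fixed {K : Type*} [Field K] {φ : K →+* K}
    (halgcl : ∀ p : Polynomial K, (∀ m : ℕ, φ (p.coeff m) = p.coeff m) → 0 < p.degree →
      ∃ a : K, φ a = a ∧ Polynomial.eval a p = 0) : {a : K | φ a = a}.Infinite := by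
  intro hfin
  let p : Polynomial K := ∏ a ∈ hfin.toFinset, (Polynomial.X - Polynomial.C a)
  have hp : p.map φ = p := by
    rw [Polynomial.map_prod]
    refine Finset.prod_congr rfl fun a ha => ?_
    have : φ a = a := by simpa using ha
    simp [this]
  have hmem : (0 : K) ∈ hfin.toFinset := by simp
  have hdeg : 0 < p.degree := by
    rw [Polynomial.degree_prod]
    simp only [Polynomial.degree_X_sub_C, Finset.sum_const, nsmul_eq_mul, mul_one]
    exact_mod_cast Finset.card_pos.2 ⟨0, hmem⟩
  have hdeg1 : (p + 1).degree = p.degree :=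
    Polynomial.degree_add_eq_left_of_degree_lt (by rwa [Polynomial.degree_one])
  obtain ⟨a, ha, h0⟩ := halgcl (p + 1) (fun m => by
    rw [← Polynomial.coeff_map, Polynomial.map_add, hp, Polynomial.map_one]) (by rwa [hdeg1])
  have : p.eval a = 0 := by
    rw [Polynomial.eval_prod]
    exact Finset.prod_eq_zero (i := a) (by simpa using ha) (by simp)
  rw [Polynomial.eval_add, this, Polynomial.eval_one, zero_add] at h0
  exact one_ne_zero h0

theorem exists_finite_forall_not_isUnit_sub {K A : Type*} [Field K] [CommRing A] [Algebra K A]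
    [Algebra.FiniteType K A] {c : A} (hc : Transcendental K c) :
    ∃ s : Set K, s.Finite ∧ ∀ a ∉ s, ¬ IsUnit (c - algebraMap K A a) := by
  let f : Polynomial K →ₐ[K] A := Polynomial.aeval c
  have hf : f.toRingHom.FinitePresentation := by
    algebraize [f.toRingHom]
    have : IsScalarTower K (Polynomial K) A := IsScalarTower.of_algHom f
    have : Algebra.FiniteType (Polynomial K) A :=
      Algebra.FiniteType.of_restrictScalars_finiteType K _ _
    exact Algebra.FinitePresentation.of_finiteType.1 this
  obtain ⟨D, hD⟩ := PrimeSpectrum.exists_constructibleSetData_iff.2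
    (PrimeSpectrum.isConstructible_range_comap hf)
  have hinj : Function.Injective f := transcendental_iff_injective.1 hc
  have hbot : (⊥ : PrimeSpectrum (Polynomial K)) ∈ D.toSet := by
    rw [hD]
    obtain ⟨q, hq, hqb⟩ := Ideal.exists_comap_eq_of_mem_minimalPrimes_of_injective
      (f := f.toRingHom) hinj ⊥ (by simp [IsDomain.minimalPrimes_eq_singleton_bot])
    exact ⟨⟨q, hq⟩, PrimeSpectrum.ext hqb⟩
  rw [PrimeSpectrum.ConstructibleSetData.toSet] at hbot
  simp only [Set.mem_iUnion] at hbot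
  obtain ⟨C, hC, hmem⟩ := hbot
  have hg : ∀ i, C.g i = 0 := fun i => by
    have := hmem.1 (Set.mem_range_self i)
    simpa using this
  have hf0 : C.f ≠ 0 := fun h => hmem.2 (by simp [h])
  refine ⟨{a | C.f.IsRoot a}, Polynomial.finite_setOfPred_isRoot hf0, fun a ha => ?_⟩
  let P : PrimeSpectrum (Polynomial K) := ⟨Ideal.span {Polynomial.X - Polynomial.C a},
    (Ideal.span_singleton_prime (Polynomial.X_sub_C_ne_zero a)).2 (Polynomial.prime_X_sub_C a)⟩
  have hP : P ∈ D.toSet := by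
    rw [PrimeSpectrum.ConstructibleSetData.toSet]
    simp only [Set.mem_iUnion]
    refine ⟨C, hC, ?_, ?_⟩
    · rintro _ ⟨i, rfl⟩
      rw [hg i]
      exact zero_mem P.asIdeal
    · intro h
      have : C.f ∈ P.asIdeal := h rfl
      exact ha (Polynomial.dvd_iff_isRoot.1 (Ideal.mem_span_singleton.1 this))
  rw [hD] at hP
  obtain ⟨q, hq⟩ := hP
  intro hu
  have h1 : (Polynomial.X - Polynomial.C a) ∈ P.asIdeal := Ideal.mem_span_singleton_self _
  rw [← hq] at h1
  have h2 : c - algebraMap K A a ∈ q.asIdeal := by simpa [f] using h1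
  exact q.2.ne_top (Ideal.eq_top_of_isUnit_mem _ h2 hu)

theorem exists_eq_algebraMap_of_fixed {K A : Type*} [Field K] [CommRing A] [Algebra K A]
    [Algebra.FiniteType K A] {φ : K →+* K}
    (halgcl : ∀ p : Polynomial K, (∀ m : ℕ, φ (p.coeff m) = p.coeff m) → 0 < p.degree →
      ∃ a : K, φ a = a ∧ Polynomial.eval a p = 0) {φA : A →+* A} (hφA : DiffSimple φA)
    (hcompat : ∀ a, φA (algebraMap K A a) = algebraMap K A (φ a)) {c : A} (hc : φA c = c) :
    ∃ a, φ a = a ∧ algebraMap K A a = c := by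
  have := hφA.nontrivial
  have key : ∀ a, φ a = a → ¬ IsUnit (c - algebraMap K A a) → algebraMap K A a = c := by
    intro a ha hu
    by_contra hne
    exact hu (hφA.isUnit_of_fixed (by rw [map_sub, hc, hcompat, ha])
      (sub_ne_zero.2 (Ne.symm hne)))
  by_cases hct : Transcendental K c
  · obtain ⟨s, hs, hs'⟩ := exists_finite_forall_not_isUnit_sub hct
    obtain ⟨a, ha, has⟩ := ((infinite_fixed halgcl).sdiff hs).nonempty
    exact ⟨a, ha, key a ha (hs' a has)⟩
  · have hint : IsIntegral K c := (not_not.1 hct : IsAlgebraic K c).isIntegral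
    have hmap : (minpoly K c).map φ = minpoly K c := by
      refine minpoly.unique K c ((minpoly.monic hint).map φ) ?_ fun q hq hq0 => ?_
      · have h1 : (φA.comp (algebraMap K A)) = (algebraMap K A).comp φ := RingHom.ext hcompat
        rw [Polynomial.aeval_def, Polynomial.eval₂_map, ← h1]
        have h2 := congrArg φA (minpoly.aeval K c)
        rwa [Polynomial.aeval_def, Polynomial.hom_eval₂, hc, map_zero] at h2
      · rw [Polynomial.degree_map]
        exact minpoly.min K c hq hq0
    obtain ⟨a, ha, h0⟩ := halgcl (minpoly K c) (fun m => by
      conv_rhs => rw [← hmap, Polynomial.coeff_map]) (minpoly.degree_pos hint)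
    refine ⟨a, ha, key a ha fun hu => ?_⟩
    obtain ⟨q, hq⟩ := Polynomial.dvd_iff_isRoot.2 (show (minpoly K c).IsRoot a from h0)
    have hroot : (c - algebraMap K A a) * Polynomial.aeval c q = 0 := by
      have := minpoly.aeval K c
      rwa [hq, map_mul, map_sub, Polynomial.aeval_X, Polynomial.aeval_C] at this
    rw [hu.mul_right_eq_zero] at hroot
    have hq0 : q ≠ 0 := by
      rintro rfl
      exact minpoly.ne_zero hint (by rw [hq, mul_zero])
    have := minpoly.degree_le_of_ne_zero K c hq0 hroot
    rw [hq, Polynomial.degree_mul, Polynomial.degree_X_sub_C,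
      Polynomial.degree_eq_natDegree hq0] at this
    have : 1 + q.natDegree ≤ q.natDegree := by exact_mod_cast this
    omega

/-- An idempotent `e` whose distinct `φ`-conjugates `e, φ e, …, φ ^ (t - 1) e` are orthogonal with
sum `1`. -/
structure IsCyclicIdempotent {S : Type*} [CommRing S] (φ : S →+* S) (e : S) (t : ℕ) : Prop where
  pos : 0 < t
  ne_zero : e ≠ 0
  period : (φ ^ t) e = e
  orthogonal : ∀ i, 0 < i → i < t → e * (φ ^ i) e = 0
  sum_eq_one : ∑ i ∈ Finset.range t, (φ ^ i) e = 1

/-- A cyclic idempotent `e` for which `e S` is a domain. -/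
structure IsPeriodicIdempotent {S : Type*} [CommRing S] (φ : S →+* S) (e : S) (t : ℕ) : Prop
    extends IsCyclicIdempotent φ e t where
  eq_zero_or_eq_zero : ∀ x y, e * (x * y) = 0 → e * x = 0 ∨ e * y = 0

theorem exists_comap_eq_minimalPrimes {S : Type*} [CommRing S] {φ : S →+* S}
    (hφ : Function.Injective φ) (p : minimalPrimes S) :
    ∃ q : minimalPrimes S, q.1.comap φ = p.1 := by
  obtain ⟨q, hq, hqp⟩ := Ideal.exists_comap_eq_of_mem_minimalPrimes_of_injective hφ p.1 p.2
  obtain ⟨q', hq', hle⟩ := Ideal.exists_minimalPrimes_le (I := ⊥) (J := q) bot_le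
  refine ⟨⟨q', hq'⟩, ?_⟩
  have := hq'.1.1
  have h1 : q'.comap φ ≤ p.1 := hqp ▸ Ideal.comap_mono hle
  exact le_antisymm h1 (p.2.2 ⟨Ideal.IsPrime.comap φ, bot_le⟩ h1)

theorem DiffSimple.exists_isPeriodicIdempotent {S : Type*} [CommRing S] [IsNoetherianRing S]
    {φ : S →+* S} (hφ : DiffSimple φ) : ∃ e t, IsPeriodicIdempotent φ e t := by
  have := hφ.nontrivial
  have hinj : Function.Injective φ := hφ.injective (ψ := φ) φ fun _ => rfl
  choose ρ hρ using exists_comap_eq_minimalPrimes hinj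
  have hρinj : Function.Injective ρ := fun p q h => Subtype.ext (by rw [← hρ p, h, hρ])
  have : Finite (minimalPrimes S) := minimalPrimes.finite_of_isNoetherianRing S
  obtain ⟨q, hq⟩ := Ideal.exists_maximal S
  have := hq.isPrime
  obtain ⟨p₀, hp₀, -⟩ := Ideal.exists_minimalPrimes_le (I := ⊥) (J := q) bot_le
  let P : ℕ → minimalPrimes S := fun i => ρ^[i] ⟨p₀, hp₀⟩
  let t := Function.minimalPeriod ρ ⟨p₀, hp₀⟩
  have ht : 0 < t := Function.minimalPeriod_pos_of_mem_periodicPts (hρinj.mem_periodicPts _)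
  have hprime : ∀ i, (P i).1.IsPrime := fun i => (P i).2.1.1
  have hPadd : ∀ i j, P (i + j) = ρ^[i] (P j) := fun i j => Function.iterate_add_apply _ _ _ _
  have hPt : ∀ i, P (i + t) = P i := fun i => by
    rw [hPadd]
    exact congrArg _ (Function.iterate_minimalPeriod)
  have hPmul : ∀ k i, P (i + t * k) = P i := fun k i => by
    induction k with
    | zero => rfl
    | succ k ih => rw [mul_add, mul_one, ← add_assoc, hPt, ih]
  have hP0 : ∀ i j, P (i + j) = P i → t ∣ j := fun i j h => by
    rw [hPadd] at h
    exact Function.isPeriodicPt_iff_minimalPeriod_dvd.1 (hρinj.iterate i h)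
  have hsucc : ∀ i x, φ x ∈ (P (i + 1)).1 ↔ x ∈ (P i).1 := fun i x => by
    have : P (i + 1) = ρ (P i) := Function.iterate_succ_apply' _ _ _
    rw [this, ← hρ (P i), Ideal.mem_comap]
  have hadd : ∀ j i x, (φ ^ j) x ∈ (P (i + j)).1 ↔ x ∈ (P i).1 := fun j => by
    induction j with
    | zero => simp
    | succ j ih =>
      intro i x
      rw [pow_succ', RingHom.mul_def, RingHom.comp_apply, ← add_assoc, hsucc, ih]
  have hzero : ∀ x, (∀ i < t, x ∈ (P i).1) → x = 0 := by
    let I : Ideal S := ⨅ i, (P i).1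
    have hI : I = ⊥ := by
      refine (hφ.2 I fun x hx => ?_).resolve_right fun h => ?_
      · rw [Ideal.mem_iInf] at hx ⊢
        intro i
        rw [← hPt, show i + t = (i + t - 1) + 1 by omega, hsucc]
        exact hx _
      · have h1 : (1 : S) ∈ I := h ▸ Submodule.mem_top
        exact (hprime 0).ne_top ((Ideal.eq_top_iff_one _).2 (Ideal.mem_iInf.1 h1 0))
    intro x hx
    have : x ∈ I := by
      rw [Ideal.mem_iInf]
      intro i
      rw [← Nat.mod_add_div i t, hPmul]
      exact hx _ (Nat.mod_lt _ ht)
    rwa [hI] at this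
  have hcop : ∀ i r, 0 < r → r < t → IsCoprime (P i).1 (P (i + r)).1 := by
    intro i r hr hrt
    let I : Ideal S := ⨅ i, (P i).1 ⊔ (P (i + r)).1
    have hI : I = ⊤ := by
      refine (hφ.2 I fun x hx => ?_).resolve_left fun h => ?_
      · rw [Ideal.mem_iInf] at hx ⊢
        intro i
        obtain ⟨u, hu, v, hv, rfl⟩ := Submodule.mem_sup.1 (hx (i + t - 1))
        rw [map_add]
        refine Submodule.add_mem_sup ?_ ?_
        · rwa [← hPt, show i + t = (i + t - 1) + 1 by omega, hsucc]
        · rwa [← hPt, show i + r + t = (i + t - 1 + r) + 1 by omega, hsucc]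
      · have hle : (Finset.range t).inf (fun i => (P i).1 ⊔ (P (i + r)).1) ≤ (P 0).1 := by
          intro x hx
          rw [Submodule.mem_finsetInf] at hx
          have hx' : x ∈ I := by
            rw [Ideal.mem_iInf]
            intro i
            have : P (i % t) = P i ∧ P (i % t + r) = P (i + r) := by
              refine ⟨by rw [← hPmul (i / t), Nat.mod_add_div], ?_⟩
              rw [← hPmul (i / t), add_right_comm, Nat.mod_add_div]
            rw [← this.1, ← this.2]
            exact hx _ (Finset.mem_range.2 (Nat.mod_lt _ ht))
          rw [h] at hx'
          rw [Ideal.mem_bot.1 hx']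
          exact zero_mem _
        obtain ⟨i, -, hi⟩ := (hprime 0).inf_le'.1 hle
        have h1 : P i = P 0 := Subtype.ext (le_antisymm (le_sup_left.trans hi)
          ((P 0).2.2 ⟨hprime i, bot_le⟩ (le_sup_left.trans hi)))
        have h2 : P (i + r) = P 0 := Subtype.ext (le_antisymm (le_sup_right.trans hi)
          ((P 0).2.2 ⟨hprime (i + r), bot_le⟩ (le_sup_right.trans hi)))
        have := Nat.le_of_dvd hr (hP0 i r (h2.trans h1.symm))
        omega
    rw [Ideal.isCoprime_iff_sup_eq]
    exact top_le_iff.1 (hI.ge.trans (iInf_le _ i))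
  obtain ⟨e, he⟩ := Ideal.exists_forall_sub_mem_ideal (ι := Fin t) (I := fun i => (P i).1)
    (fun i j hij => by
      rcases lt_or_gt_of_ne hij with h | h
      · have := hcop i (j - i) (by omega) (by omega)
        rwa [show (i : ℕ) + (j - i) = j by omega] at this
      · have := hcop j (i - j) (by omega) (by omega)
        rw [show (j : ℕ) + (i - j) = i by omega] at this
        exact this.symm) (fun i => if (i : ℕ) = 0 then 1 else 0)
  have he0 : 1 - e ∈ (P 0).1 := by
    have := he ⟨0, ht⟩
    rw [if_pos rfl] at this
    rw [← neg_sub]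
    exact neg_mem this
  have hei : ∀ i, 0 < i → i < t → e ∈ (P i).1 := fun i h0 h1 => by
    have := he ⟨i, h1⟩
    rwa [if_neg h0.ne', sub_zero] at this
  have hconj : ∀ i j, i < t → j < t → i ≠ j → (φ ^ i) e ∈ (P j).1 := by
    intro i j hi hj hij
    rcases lt_or_gt_of_ne hij with h | h
    · have := hei (j - i) (by omega) (by omega)
      rwa [← hadd i, show j - i + i = j by omega] at this
    · have := hei (j + t - i) (by omega) (by omega)
      rwa [← hadd i, show j + t - i + i = j + t by omega, hPt] at this
  have hconj' : ∀ i, 1 - (φ ^ i) e ∈ (P i).1 := fun i => by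
    have := (hadd i 0 (1 - e)).2 he0
    rwa [zero_add, map_sub, map_one] at this
  refine ⟨e, t, ⟨ht, ?_, ?_, ?_, ?_⟩, ?_⟩
  · rintro rfl
    rw [sub_zero] at he0
    exact (hprime 0).ne_top ((Ideal.eq_top_iff_one _).2 he0)
  · rw [← sub_eq_zero]
    refine hzero _ fun i hi => ?_
    rcases Nat.eq_zero_or_pos i with rfl | h0
    · have := hconj' t
      rw [← zero_add t, hPt, zero_add] at this
      simpa using sub_mem he0 this
    · refine sub_mem ?_ (hei i h0 hi)
      rw [← hPt, hadd]
      exact hei i h0 hi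
  · intro i h0 hi
    refine hzero _ fun j hj => ?_
    rcases Nat.eq_zero_or_pos j with rfl | hj0
    · exact Ideal.mul_mem_left _ _ (hconj i 0 hi hj (by omega))
    · exact Ideal.mul_mem_right _ _ (hei j hj0 hj)
  · rw [← sub_eq_zero]
    refine hzero _ fun j hj => ?_
    rw [← Finset.add_sum_erase _ _ (Finset.mem_range.2 hj), add_sub_right_comm]
    refine add_mem ?_ (sum_mem fun i hi => ?_)
    · rw [← neg_sub]
      exact neg_mem (hconj' j)
    · rw [Finset.mem_erase, Finset.mem_range] at hi
      exact hconj i j hi.2 hj hi.1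
  · have hP0e : ∀ x, x ∈ (P 0).1 → e * x = 0 := fun x hx => hzero _ fun j hj => by
      rcases Nat.eq_zero_or_pos j with rfl | hj0
      · exact Ideal.mul_mem_left _ _ hx
      · exact Ideal.mul_mem_right _ _ (hei j hj0 hj)
    intro x y h
    have : x * y ∈ (P 0).1 := by
      have := Ideal.mul_mem_right (x * y) _ he0
      rwa [sub_mul, one_mul, h, sub_zero] at this
    exact ((hprime 0).mem_or_mem this).imp (hP0e x) (hP0e y)

namespace IsCyclicIdempotent

variable {S : Type*} [CommRing S] {φ : S →+* S} {e : S} {t : ℕ}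

theorem mul_self (h : IsCyclicIdempotent φ e t) : e * e = e := by
  have h1 := congrArg (e * ·) h.sum_eq_one
  simp only [Finset.mul_sum, mul_one] at h1
  rw [Finset.sum_eq_single 0] at h1
  · simpa using h1
  · intro i hi h0
    exact h.orthogonal i (Nat.pos_of_ne_zero h0) (Finset.mem_range.1 hi)
  · intro h0
    exact absurd (Finset.mem_range.2 h.pos) h0

theorem sum_mul (h : IsCyclicIdempotent φ e t) (f : S) :
    ∑ i ∈ Finset.range t, (φ ^ i) e * f = f := by
  rw [← Finset.sum_mul, h.sum_eq_one, one_mul]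

/-- An element of period `t` agrees with a constant on the component of a cyclic idempotent. -/
theorem exists_fixed_mul_eq (h : IsCyclicIdempotent φ e t) {f : S} (hf : (φ ^ t) f = f) :
    ∃ c, φ c = c ∧ f * e = c * e := by
  refine ⟨∑ i ∈ Finset.range t, (φ ^ i) (f * e), ?_, ?_⟩
  · have h1 : (φ ^ t) (f * e) = f * e := by rw [map_mul, hf, h.period]
    have h2 := Finset.sum_range_succ (fun i => (φ ^ i) (f * e)) t
    rw [Finset.sum_range_succ', h1, pow_zero, RingHom.one_def, RingHom.id_apply] at h2
    rw [map_sum, ← add_right_cancel h2]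
    refine Finset.sum_congr rfl fun i _ => ?_
    rw [pow_succ']
    rfl
  · rw [Finset.sum_mul, Finset.sum_eq_single 0]
    · simp [mul_assoc, h.mul_self]
    · intro i hi h0
      rw [map_mul, mul_assoc, mul_comm _ e,
        h.orthogonal i (Nat.pos_of_ne_zero h0) (Finset.mem_range.1 hi), mul_zero]
    · intro h0
      exact absurd (Finset.mem_range.2 h.pos) h0

end IsCyclicIdempotent

namespace IsPeriodicIdempotent

variable {S : Type*} [CommRing S] {φ : S →+* S} {e : S} {t : ℕ}

theorem map (h : IsPeriodicIdempotent φ e t) (hφ : Function.Injective φ) :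
    IsPeriodicIdempotent φ (φ e) t := by
  have hc : ∀ i x, (φ ^ i) (φ x) = φ ((φ ^ i) x) := fun i x => by
    rw [← RingHom.comp_apply, ← RingHom.comp_apply, ← RingHom.mul_def, ← RingHom.mul_def,
      ← pow_succ, ← pow_succ']
  refine ⟨⟨h.pos, fun h0 => h.ne_zero (hφ (by rw [h0, map_zero])), by rw [hc, h.period],
    fun i h0 hi => by rw [hc, ← map_mul, h.orthogonal i h0 hi, map_zero], ?_⟩, fun x y hxy => ?_⟩
  · simp only [hc]
    rw [← map_sum, h.sum_eq_one, map_one]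
  · have hinj : Function.Injective (φ ^ (t - 1)) := by
      rw [RingHom.coe_pow]
      exact hφ.iterate _
    have he : (φ ^ (t - 1)) (φ e) = e := by
      rw [← RingHom.comp_apply, ← RingHom.mul_def, ← pow_succ, Nat.sub_add_cancel h.pos, h.period]
    have h1 := congrArg (φ ^ (t - 1)) hxy
    rw [map_mul, map_mul, map_zero, he] at h1
    refine (h.eq_zero_or_eq_zero _ _ h1).imp (fun h2 => hinj ?_) fun h2 => hinj ?_
    all_goals rw [map_mul, he, h2, map_zero]

theorem map_pow (h : IsPeriodicIdempotent φ e t) (hφ : Function.Injective φ) (i : ℕ) :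
    IsPeriodicIdempotent φ ((φ ^ i) e) t := by
  induction i with
  | zero => exact h
  | succ i ih =>
    rw [pow_succ']
    exact ih.map hφ

theorem mul_eq_zero_or_eq (h : IsPeriodicIdempotent φ e t) {f : S} (hf : f * f = f) :
    e * f = 0 ∨ e * f = e := by
  refine (h.eq_zero_or_eq_zero f (1 - f) ?_).imp_right fun h1 => ?_
  · rw [mul_sub, mul_one, hf, sub_self, mul_zero]
  · rw [mul_sub, mul_one, sub_eq_zero] at h1
    exact h1.symm

theorem pow_period_of_mul_self (h : IsPeriodicIdempotent φ e t) (hφ : Function.Injective φ)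
    {f : S} (hf : f * f = f) : (φ ^ t) f = f := by
  rw [← h.sum_mul ((φ ^ t) f)]
  conv_rhs => rw [← h.sum_mul f]
  refine Finset.sum_congr rfl fun i _ => ?_
  have hi := h.map_pow hφ i
  rw [← hi.period, ← map_mul, hi.period]
  rcases hi.mul_eq_zero_or_eq hf with h1 | h1
  · rw [h1, map_zero]
  · rw [h1, hi.period]

end IsPeriodicIdempotent

theorem coe_pow_apply_of_coe_eq {S : Type*} [CommRing S] {T : Type*} [CommRing T] {j : T →+* S}
    {Φ : S →+* S} {ψ : T →+* T} (h : ∀ a, j (ψ a) = Φ (j a)) (i : ℕ) (a : T) :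
    j ((ψ ^ i) a) = (Φ ^ i) (j a) := by
  rw [RingHom.coe_pow, RingHom.coe_pow]
  exact (Function.Semiconj.iterate_right (f := j) h i) a

namespace IsCyclicIdempotent

theorem of_map {S T : Type*} [CommRing S] [CommRing T] {j : T →+* S}
    {Φ : S →+* S} {ψ : T →+* T} (h : ∀ a, j (ψ a) = Φ (j a)) (hj : Function.Injective j)
    {e : T} {t : ℕ} (he : IsCyclicIdempotent ψ e t) : IsCyclicIdempotent Φ (j e) t := by
  refine ⟨he.pos, (map_ne_zero_iff j hj).2 he.ne_zero, ?_, fun i h0 hi => ?_, ?_⟩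
  · rw [← coe_pow_apply_of_coe_eq h, he.period]
  · rw [← coe_pow_apply_of_coe_eq h, ← map_mul, he.orthogonal i h0 hi, map_zero]
  · simp only [← coe_pow_apply_of_coe_eq h]
    rw [← map_sum, he.sum_eq_one, map_one]

end IsCyclicIdempotent

namespace IsSimpleTower

variable {K V S : Type*} [Field K] [Fintype V] [CommRing S] [Algebra K S]
  {φ σ : K →+* K} {B : Matrix V V K} {Φ τ : S →+* S} {x : ℕ → V → S}

theorem finiteType_stageAlg (K : Type*) [Field K] [Algebra K S] (x : ℕ → V → S) (d : ℕ) :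
    Algebra.FiniteType K (stageAlg K x d) := by
  rw [← Subalgebra.fg_iff_finiteType]
  have hfin : {y | ∃ i < d, ∃ v, y = x i v}.Finite := by
    refine ((Set.finite_Iio d).prod (Set.finite_univ (α := V))).image (fun p => x p.1 p.2)
      |>.subset ?_
    rintro _ ⟨i, hi, v, rfl⟩
    exact ⟨(i, v), ⟨hi, trivial⟩, rfl⟩
  exact ⟨hfin.toFinset, by rw [Set.Finite.coe_toFinset, stageAlg]⟩

theorem isNoetherianRing_stageAlg (K : Type*) [Field K] [Algebra K S] (x : ℕ → V → S) (d : ℕ) :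
    IsNoetherianRing (stageAlg K x d) :=
  have := finiteType_stageAlg K x d
  Algebra.FiniteType.isNoetherianRing K _

theorem nontrivial (h : IsSimpleTower φ σ B Φ τ x) : Nontrivial S := by
  obtain ⟨φd, -, hφd⟩ := h.simple_stage 0
  have := hφd.nontrivial
  exact (Subtype.val_injective (p := (· ∈ stageAlg K x 0))).nontrivial

theorem phi_mem (h : IsSimpleTower φ σ B Φ τ x) {d : ℕ} {a : S} (ha : a ∈ stageAlg K x d) :
    Φ a ∈ stageAlg K x d := by
  obtain ⟨φd, h1, -⟩ := h.simple_stage d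
  have := (φd ⟨a, ha⟩).2
  rwa [h1] at this

theorem sigma_mem (h : IsSimpleTower φ σ B Φ τ x) {d : ℕ} {a : S} (ha : a ∈ stageAlg K x d) :
    τ a ∈ stageAlg K x (d + 1) :=
  map_mem_stageAlg h.sigma_algebraMap (fun i hi v => by
    rw [h.sigma_gen]
    exact gen_mem_stageAlg K x (by omega) v) ha

theorem diffSimple (h : IsSimpleTower φ σ B Φ τ x) : DiffSimple Φ := by
  have := h.nontrivial
  refine ⟨bot_ne_top, fun I hI => ?_⟩
  by_contra! hne
  obtain ⟨a, ha, ha0⟩ := Submodule.exists_mem_ne_zero_of_ne_bot hne.1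
  obtain ⟨d, hd⟩ := h.exists_mem_stage a
  obtain ⟨φd, h1, h2⟩ := h.simple_stage d
  rcases h2.2 (I.comap (stageAlg K x d).val.toRingHom) (fun y hy => by
    have : Φ y ∈ I := hI _ hy
    rwa [← h1] at this) with h3 | h3
  · have : (⟨a, hd⟩ : stageAlg K x d) ∈ (⊥ : Ideal (stageAlg K x d)) := h3 ▸ ha
    exact ha0 (congrArg Subtype.val (Ideal.mem_bot.1 this))
  · refine hne.2 ((Ideal.eq_top_iff_one _).2 ?_)
    simpa using (Ideal.eq_top_iff_one _).1 h3

theorem injective (h : IsSimpleTower φ σ B Φ τ x) : Function.Injective Φ :=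
  have := h.nontrivial
  h.diffSimple.injective (ψ := Φ) Φ fun _ => rfl

/-- The constants of a simple tower are those of the base field. -/
theorem exists_eq_algebraMap (h : IsSimpleTower φ σ B Φ τ x)
    (halgcl : ∀ p : Polynomial K, (∀ m : ℕ, φ (p.coeff m) = p.coeff m) → 0 < p.degree →
      ∃ a : K, φ a = a ∧ Polynomial.eval a p = 0) {c : S} (hc : Φ c = c) :
    ∃ a, φ a = a ∧ algebraMap K S a = c := by
  obtain ⟨d, hd⟩ := h.exists_mem_stage c
  obtain ⟨φd, h1, h2⟩ := h.simple_stage d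
  have := finiteType_stageAlg K x d
  obtain ⟨a, ha, hac⟩ := exists_eq_algebraMap_of_fixed (K := K) halgcl h2
    (fun a => Subtype.ext ((h1 _).trans (h.phi_algebraMap a)))
    (c := ⟨c, hd⟩) (Subtype.ext ((h1 _).trans hc))
  exact ⟨a, ha, congrArg Subtype.val hac⟩

/-- Each stage of a simple tower is a cyclic product of domains. -/
theorem exists_isPeriodicIdempotent_stage (h : IsSimpleTower φ σ B Φ τ x) (d : ℕ) :
    ∃ e ∈ stageAlg K x d, ∃ t, IsCyclicIdempotent Φ e t ∧
      ∀ i, ∀ a ∈ stageAlg K x d, ∀ b ∈ stageAlg K x d, (Φ ^ i) e * (a * b) = 0 →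
        (Φ ^ i) e * a = 0 ∨ (Φ ^ i) e * b = 0 := by
  obtain ⟨φd, h1, h2⟩ := h.simple_stage d
  have := isNoetherianRing_stageAlg K x d
  have := h2.nontrivial
  obtain ⟨e, t, he⟩ := h2.exists_isPeriodicIdempotent
  have h1' : ∀ a, (stageAlg K x d).val.toRingHom (φd a) = Φ ((stageAlg K x d).val.toRingHom a) :=
    h1
  refine ⟨e, e.2, t, he.toIsCyclicIdempotent.of_map h1' Subtype.val_injective,
    fun i a ha b hb hab => ?_⟩
  have hcoe : ∀ i, (Φ ^ i) (e : S) = (((φd ^ i) e : stageAlg K x d) : S) := fun i =>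
    (coe_pow_apply_of_coe_eq h1' i e).symm
  have hi := he.map_pow (h2.injective (ψ := φd) φd fun _ => rfl) i
  rw [hcoe] at hab ⊢
  exact (hi.eq_zero_or_eq_zero ⟨a, ha⟩ ⟨b, hb⟩ (Subtype.ext hab)).imp
    (congrArg Subtype.val) (congrArg Subtype.val)

theorem mem_stageAlg_of_pow_eq (h : IsSimpleTower φ σ B Φ τ x)
    (halgcl : ∀ p : Polynomial K, (∀ m : ℕ, φ (p.coeff m) = p.coeff m) → 0 < p.degree →
      ∃ a : K, φ a = a ∧ Polynomial.eval a p = 0) {d : ℕ} {e : S} (hed : e ∈ stageAlg K x d)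
    {t : ℕ} (he : IsCyclicIdempotent Φ e t) {f : S} (hf : (Φ ^ t) f = f) :
    f ∈ stageAlg K x d := by
  rw [← he.sum_mul f]
  have hpow : ∀ i, ∀ a ∈ stageAlg K x d, (Φ ^ i) a ∈ stageAlg K x d := fun i a ha => by
    induction i with
    | zero => exact ha
    | succ i ih => rw [pow_succ']; exact h.phi_mem ih
  refine sum_mem fun i hi => ?_
  have hit := Finset.mem_range.1 hi
  have hadd : ∀ m m' a, (Φ ^ m) ((Φ ^ m') a) = (Φ ^ (m + m')) a := fun m m' a => by
    rw [pow_add]; rfl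
  obtain ⟨c, hc, hce⟩ := he.exists_fixed_mul_eq (f := (Φ ^ (t - i)) f) (by
    rw [hadd, add_comm, ← hadd, hf])
  obtain ⟨a, -, rfl⟩ := h.exists_eq_algebraMap halgcl hc
  have := congrArg (Φ ^ i) hce
  rw [map_mul, map_mul, hadd, Nat.add_sub_cancel' hit.le, hf, mul_comm] at this
  rw [this]
  exact mul_mem (hpow i _ (Subalgebra.algebraMap_mem _ _)) (hpow i _ hed)

/-- Idempotents of a stage stay in that stage under the endomorphism `τ`. -/
theorem sigma_mem_of_mul_self (h : IsSimpleTower φ σ B Φ τ x)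
    (halgcl : ∀ p : Polynomial K, (∀ m : ℕ, φ (p.coeff m) = p.coeff m) → 0 < p.degree →
      ∃ a : K, φ a = a ∧ Polynomial.eval a p = 0) {d : ℕ} {f : S} (hfd : f ∈ stageAlg K x d)
    (hf : f * f = f) : τ f ∈ stageAlg K x d := by
  obtain ⟨φd, h1, h2⟩ := h.simple_stage d
  have := isNoetherianRing_stageAlg K x d
  have := h2.nontrivial
  obtain ⟨e, t, he⟩ := h2.exists_isPeriodicIdempotent
  have h1' : ∀ a, (stageAlg K x d).val.toRingHom (φd a) = Φ ((stageAlg K x d).val.toRingHom a) :=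
    h1
  refine h.mem_stageAlg_of_pow_eq halgcl e.2
    (he.toIsCyclicIdempotent.of_map h1' Subtype.val_injective) ?_
  have h3 : (Φ ^ t) f = f := by
    have h4 := he.pow_period_of_mul_self (h2.injective (ψ := φd) φd fun _ => rfl)
      (f := ⟨f, hfd⟩) (Subtype.ext hf)
    have h5 := coe_pow_apply_of_coe_eq h1' t ⟨f, hfd⟩
    rw [h4] at h5
    exact h5.symm
  have hcomm : ∀ a, τ ((Φ ^ t) a) = (Φ ^ t) (τ a) :=
    fun a => coe_pow_apply_of_coe_eq (j := τ) (fun a => (h.comm a).symm) t a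
  rw [← hcomm, h3]

end IsSimpleTower

/-- The linear substitution of variables by the matrix `R`. -/
noncomputable def MvPolynomial.linearSubst {V A S : Type*} [Fintype V] [CommRing A] [CommRing S]
    (j : A →+* S) (R : Matrix V V S) : MvPolynomial V A →+* MvPolynomial V S :=
  MvPolynomial.eval₂Hom (MvPolynomial.C.comp j)
    fun v => ∑ u, MvPolynomial.C (R v u) * MvPolynomial.X u

@[simp]
theorem MvPolynomial.linearSubst_C {V A S : Type*} [Fintype V] [CommRing A] [CommRing S]
    (j : A →+* S) (R : Matrix V V S) (a : A) :
    MvPolynomial.linearSubst j R (MvPolynomial.C a) = MvPolynomial.C (j a) :=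
  MvPolynomial.eval₂_C _ _ _

/-- The ideal of relations of `x`, after the linear substitution `R`. -/
noncomputable def substRelations {V A S : Type*} [Fintype V] [CommRing A] [CommRing S]
    (j : A →+* S) (x : V → S) (R : Matrix V V S) : Ideal (MvPolynomial V S) :=
  (RingHom.ker (MvPolynomial.eval₂Hom j x)).map (MvPolynomial.linearSubst j R)

theorem exists_lift_linearSubst {V A A' S S' : Type*} [Fintype V] [CommRing A] [CommRing A']
    [CommRing S] [CommRing S'] {j : A →+* S} {j' : A' →+* S'} {ψ : S →+* S'} {α : A →+* A'}
    (hα : ∀ a, j' (α a) = ψ (j a)) {x : V → S} {x' : V → S'} {R : Matrix V V S}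
    {R' : Matrix V V S'} {M : Matrix V V A'} (hx : ∀ v, ψ (x v) = ∑ w, j' (M v w) * x' w)
    (hR : ∀ v u, ψ (R v u) = ∑ w, j' (M v w) * R' w u) :
    ∃ ℓ : MvPolynomial V A →+* MvPolynomial V A',
      (∀ p, MvPolynomial.map ψ (MvPolynomial.linearSubst j R p) =
        MvPolynomial.linearSubst j' R' (ℓ p)) ∧
      ∀ p, MvPolynomial.eval₂Hom j' x' (ℓ p) = ψ (MvPolynomial.eval₂Hom j x p) := by
  let ℓ : MvPolynomial V A →+* MvPolynomial V A' := MvPolynomial.eval₂Hom (MvPolynomial.C.comp α)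
    fun v => ∑ w, MvPolynomial.C (M v w) * MvPolynomial.X w
  refine ⟨ℓ, fun p => ?_, fun p => ?_⟩
  · suffices H : (MvPolynomial.map ψ).comp (MvPolynomial.linearSubst j R) =
        (MvPolynomial.linearSubst j' R').comp ℓ from congrArg (fun g => g p) H
    refine MvPolynomial.ringHom_ext (fun a => ?_) fun v => ?_
    · simp [ℓ, MvPolynomial.linearSubst, hα]
    · simp only [ℓ, MvPolynomial.linearSubst, RingHom.comp_apply, MvPolynomial.coe_eval₂Hom,
        MvPolynomial.eval₂_X, map_sum, map_mul, MvPolynomial.map_C, MvPolynomial.map_X, hR,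
        MvPolynomial.eval₂_C, Finset.sum_mul, Finset.mul_sum, mul_assoc]
      rw [Finset.sum_comm]
  · suffices H : (MvPolynomial.eval₂Hom j' x').comp ℓ = ψ.comp (MvPolynomial.eval₂Hom j x) from
      congrArg (fun g => g p) H
    refine MvPolynomial.ringHom_ext (fun a => ?_) fun v => ?_
    · simp [ℓ, hα]
    · simp [ℓ, hx]

theorem map_mem_substRelations {V A A' S S' : Type*} [Fintype V] [CommRing A] [CommRing A']
    [CommRing S] [CommRing S'] {j : A →+* S} {j' : A' →+* S'} {ψ : S →+* S'} {α : A →+* A'}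
    (hα : ∀ a, j' (α a) = ψ (j a)) {x : V → S} {x' : V → S'} {R : Matrix V V S}
    {R' : Matrix V V S'} {M : Matrix V V A'} (hx : ∀ v, ψ (x v) = ∑ w, j' (M v w) * x' w)
    (hR : ∀ v u, ψ (R v u) = ∑ w, j' (M v w) * R' w u) {f : MvPolynomial V S}
    (hf : f ∈ substRelations j x R) : MvPolynomial.map ψ f ∈ substRelations j' x' R' := by
  obtain ⟨ℓ, h1, h2⟩ := exists_lift_linearSubst hα hx hR
  suffices H : substRelations j x R ≤ (substRelations j' x' R').comap (MvPolynomial.map ψ) from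
    H hf
  refine Ideal.map_le_iff_le_comap.2 fun p hp => ?_
  rw [Ideal.mem_comap, Ideal.mem_comap, h1]
  refine Ideal.mem_map_of_mem _ ?_
  rw [RingHom.mem_ker, h2, RingHom.mem_ker.1 hp, map_zero]

theorem linearSubst_linearSubst {V A S : Type*} [Fintype V] [DecidableEq V] [CommRing A]
    [CommRing S] (j : A →+* S) {R R' : Matrix V V S} (h : R * R' = 1) (p : MvPolynomial V A) :
    MvPolynomial.linearSubst (RingHom.id S) R' (MvPolynomial.linearSubst j R p) =
      MvPolynomial.map j p := by
  suffices H : (MvPolynomial.linearSubst (RingHom.id S) R').comp (MvPolynomial.linearSubst j R) =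
      MvPolynomial.map j from congrArg (fun g => g p) H
  refine MvPolynomial.ringHom_ext (fun a => ?_) fun v => ?_
  · simp [MvPolynomial.linearSubst]
  · simp only [MvPolynomial.linearSubst, RingHom.comp_apply, MvPolynomial.coe_eval₂Hom,
      MvPolynomial.eval₂_X, map_sum, map_mul, MvPolynomial.map_X, MvPolynomial.eval₂_C,
      Finset.mul_sum, RingHom.id_apply]
    rw [Finset.sum_comm]
    have hw : ∀ w, ∑ u, R v u * R' u w = if v = w then 1 else 0 := fun w => by
      rw [← Matrix.mul_apply, h, Matrix.one_apply]
    simp only [← mul_assoc, ← map_mul, ← Finset.sum_mul, ← map_sum, hw]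
    simp

theorem mem_map_of_mem_substRelations {V A S : Type*} [Fintype V] [DecidableEq V] [CommRing A]
    [CommRing S] {j : A →+* S} {x : V → S} {R R' : Matrix V V S} (h : R * R' = 1)
    {f : MvPolynomial V S} (hf : f ∈ substRelations j x R) :
    MvPolynomial.linearSubst (RingHom.id S) R' f ∈
      (RingHom.ker (MvPolynomial.eval₂Hom j x)).map (MvPolynomial.map j) := by
  have h1 : (MvPolynomial.linearSubst (RingHom.id S) R').comp (MvPolynomial.linearSubst j R) =
      MvPolynomial.map j := RingHom.ext (linearSubst_linearSubst j h)
  rw [← h1, ← Ideal.map_map]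
  exact Ideal.mem_map_of_mem _ hf

/-- A `σ`-compatible sequence of `φ`-ideals of a polynomial ring over a `φ`-simple ring is
eventually `σ`-reflexive, provided that `σ` maps the constants onto themselves. -/
theorem exists_forall_mem_of_map_mem {V S : Type*} [Finite V] [CommRing S] {Φ τ : S →+* S}
    (hΦ : DiffSimple Φ) (hcomm : ∀ a, Φ (τ a) = τ (Φ a))
    (honto : ∀ c, Φ c = c → ∃ b, Φ b = b ∧ τ b = c) {𝔟 : ℕ → Ideal (MvPolynomial V S)}
    (hstable : ∀ d, ∀ f ∈ 𝔟 d, MvPolynomial.map Φ f ∈ 𝔟 d)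
    (hnext : ∀ d, ∀ f ∈ 𝔟 d, MvPolynomial.map τ f ∈ 𝔟 (d + 1)) :
    ∃ D, ∀ d ≥ D, ∀ f, MvPolynomial.map τ f ∈ 𝔟 (d + 1) → f ∈ 𝔟 d := by
  have := hΦ.nontrivial
  let C : Subring S := RingHom.eqLocus Φ (RingHom.id S)
  have hfield : IsField C := by
    refine ⟨⟨0, 1, zero_ne_one⟩, mul_comm, fun {c} h0 => ?_⟩
    have hc0 : (c : S) ≠ 0 := fun h => h0 (Subtype.ext h)
    obtain ⟨y, hy⟩ := (hΦ.isUnit_of_fixed c.2 hc0).exists_right_inv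
    have hc : Φ c = c := c.2
    refine ⟨⟨y, ?_⟩, Subtype.ext hy⟩
    change Φ y = y
    have h1 := congrArg Φ hy
    rw [map_mul, map_one, hc] at h1
    calc Φ y = (c * y) * Φ y := by rw [hy, one_mul]
      _ = (c * Φ y) * y := by ring
      _ = y := by rw [h1, one_mul]
  have : IsNoetherianRing C := by
    let := hfield.toField
    infer_instance
  let s : C →+* C := (τ.comp C.subtype).codRestrict C fun c => by
    change Φ (τ c) = τ c
    rw [hcomm]
    exact congrArg τ c.2
  have hs : Function.Surjective s := fun c => by
    obtain ⟨b, hb, hbc⟩ := honto c c.2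
    exact ⟨⟨b, hb⟩, Subtype.ext hbc⟩
  have hsub : ∀ g : MvPolynomial V C, MvPolynomial.map τ (MvPolynomial.map C.subtype g) =
      MvPolynomial.map C.subtype (MvPolynomial.map s g) := fun g => by
    rw [MvPolynomial.map_map, MvPolynomial.map_map]
    rfl
  have hpow : ∀ d (f : MvPolynomial V C), MvPolynomial.map s (MvPolynomial.map (s ^ d) f) =
      MvPolynomial.map (s ^ (d + 1)) f := fun d f => by
    rw [MvPolynomial.map_map, ← RingHom.mul_def, ← pow_succ']
  let J : ℕ →o Ideal (MvPolynomial V C) :=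
    { toFun := fun d => ((𝔟 d).comap (MvPolynomial.map C.subtype)).comap (MvPolynomial.map (s ^ d))
      monotone' := monotone_nat_of_le_succ fun d f hf => by
        have := hnext d _ hf
        rw [hsub, hpow] at this
        exact this }
  obtain ⟨D, hD⟩ := monotone_stabilizes_iff_noetherian.2
    (inferInstance : IsNoetherian (MvPolynomial V C) (MvPolynomial V C)) J
  have key : ∀ d ≥ D, ∀ g : MvPolynomial V C,
      MvPolynomial.map C.subtype (MvPolynomial.map s g) ∈ 𝔟 (d + 1) →
      MvPolynomial.map C.subtype g ∈ 𝔟 d := fun d hd g hg => by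
    have hsd : Function.Surjective (s ^ d) := by
      rw [RingHom.coe_pow]
      exact hs.iterate d
    obtain ⟨f, rfl⟩ := MvPolynomial.map_surjective _ hsd g
    rw [hpow] at hg
    have hf : f ∈ J (d + 1) := hg
    rw [← hD (d + 1) (by omega), hD d hd] at hf
    exact hf
  refine ⟨D, fun d hd f hf => ?_⟩
  let N : Submodule S (MvPolynomial V S) :=
    { carrier := {f | MvPolynomial.map τ f ∈ 𝔟 (d + 1)}
      add_mem' := fun ha hb => by
        change MvPolynomial.map τ _ ∈ 𝔟 (d + 1)
        rw [map_add]
        exact add_mem ha hb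
      zero_mem' := by
        change MvPolynomial.map τ 0 ∈ 𝔟 (d + 1)
        rw [map_zero]
        exact zero_mem _
      smul_mem' := fun c a ha => by
        change MvPolynomial.map τ _ ∈ 𝔟 (d + 1)
        rw [MvPolynomial.smul_eq_C_mul, map_mul]
        exact Ideal.mul_mem_left _ _ ha }
  have hN : ∀ f ∈ N, MvPolynomial.map Φ f ∈ N := fun f hf => by
    change MvPolynomial.map τ _ ∈ 𝔟 (d + 1)
    rw [MvPolynomial.map_map, show τ.comp Φ = Φ.comp τ from RingHom.ext fun a => (hcomm a).symm,
      ← MvPolynomial.map_map]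
    exact hstable _ _ hf
  have hle : Submodule.span S {g | g ∈ N ∧ MvPolynomial.map Φ g = g} ≤
      (𝔟 d).restrictScalars S := by
    refine Submodule.span_le.2 ?_
    rintro g ⟨hg, hfix⟩
    have hrange : g ∈ Set.range (MvPolynomial.map C.subtype : MvPolynomial V C →+* _) := by
      rw [MvPolynomial.mem_range_map_iff_coeffs_subset]
      intro c hc
      obtain ⟨m, -, rfl⟩ := MvPolynomial.mem_coeffs_iff.1 hc
      refine ⟨⟨MvPolynomial.coeff m g, ?_⟩, rfl⟩
      change Φ _ = _
      rw [← MvPolynomial.coeff_map, hfix]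
      rfl
    obtain ⟨g, rfl⟩ := hrange
    have hg' : MvPolynomial.map τ (MvPolynomial.map C.subtype g) ∈ 𝔟 (d + 1) := hg
    rw [hsub] at hg'
    exact key d hd g hg'
  exact hle (mem_span_fixed_of_stable hΦ hN hf)

theorem exists_eval₂_eq_of_mem_stageAlg {K V S : Type*} [Field K] [CommRing S] [Algebra K S]
    {x : ℕ → V → S} {d : ℕ} {a : S} (ha : a ∈ stageAlg K x (d + 1)) :
    ∃ p, MvPolynomial.eval₂Hom (algebraMap (stageAlg K x d) S) (x d) p = a := by
  induction ha using Algebra.adjoin_induction with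
  | mem y hy =>
    obtain ⟨i, hi, v, rfl⟩ := hy
    rcases Nat.lt_succ_iff_lt_or_eq.1 hi with h | rfl
    · exact ⟨MvPolynomial.C ⟨_, gen_mem_stageAlg K x h v⟩, MvPolynomial.eval₂Hom_C _ _ _⟩
    · exact ⟨MvPolynomial.X v, MvPolynomial.eval₂Hom_X' _ _ _⟩
  | algebraMap r =>
    exact ⟨MvPolynomial.C (algebraMap K _ r), MvPolynomial.eval₂Hom_C _ _ _⟩
  | add a b _ _ ha hb =>
    obtain ⟨p, rfl⟩ := ha
    obtain ⟨q, rfl⟩ := hb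
    exact ⟨p + q, map_add _ _ _⟩
  | mul a b _ _ ha hb =>
    obtain ⟨p, rfl⟩ := ha
    obtain ⟨q, rfl⟩ := hb
    exact ⟨p * q, map_mul _ _ _⟩

/-- Descent along a `σ`-reflexive step: if `ψ` maps an element of `A[x]` into the image of `A'`,
then the element itself comes from `A`. -/
theorem exists_eq_of_map_mem_range {V A A' S S' : Type*} [Fintype V] [DecidableEq V] [CommRing A]
    [CommRing A'] [CommRing S] [Nontrivial S] [CommRing S'] {j : A →+* S} {j' : A' →+* S'}
    {ψ : S →+* S'} {α : A →+* A'} (hα : ∀ a, j' (α a) = ψ (j a)) {x : V → S} {x' : V → S'}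
    {R R₁ : Matrix V V S} {R' : Matrix V V S'} {N : Matrix V V A'}
    (hx : ∀ v, ψ (x v) = ∑ w, j' (N v w) * x' w)
    (hR : ∀ v u, ψ (R v u) = ∑ w, j' (N v w) * R' w u) (hRR₁ : R * R₁ = 1)
    (hreflexive : ∀ f, MvPolynomial.map ψ f ∈ substRelations j' x' R' →
      f ∈ substRelations j x R)
    {φ : A →+* A} (hφ : DiffSimple φ) {Φ : S →+* S} (hΦ : ∀ a, Φ (j a) = j (φ a))
    {M M' : Matrix V V A} (hM : M * M' = 1) (hΦx : ∀ v, Φ (x v) = ∑ w, j (M v w) * x w)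
    (p : MvPolynomial V A) {b : A'} (hb : j' b = ψ (MvPolynomial.eval₂Hom j x p)) :
    ∃ a, j a = MvPolynomial.eval₂Hom j x p := by
  obtain ⟨ℓ, hℓ1, hℓ2⟩ := exists_lift_linearSubst hα hx hR
  set e := MvPolynomial.eval₂Hom j x p with he
  have h1 : MvPolynomial.linearSubst j R p - MvPolynomial.C e ∈ substRelations j x R := by
    refine hreflexive _ ?_
    have h2 : MvPolynomial.map ψ (MvPolynomial.linearSubst j R p - MvPolynomial.C e) =
        MvPolynomial.linearSubst j' R' (ℓ p - MvPolynomial.C b) := by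
      rw [map_sub, map_sub, hℓ1, MvPolynomial.map_C, ← hb, MvPolynomial.linearSubst_C]
    rw [h2]
    refine Ideal.mem_map_of_mem _ ?_
    rw [RingHom.mem_ker, map_sub, hℓ2, ← he, MvPolynomial.eval₂Hom_C, hb, sub_self]
  have h3 := mem_map_of_mem_substRelations hRR₁ h1
  rw [map_sub, linearSubst_linearSubst _ hRR₁] at h3
  obtain ⟨G, hG1, hG⟩ := exists_functional (V := V) (ψ := Φ) (j := j) (x := x) hφ hΦ hM hΦx j h3
  have h4 : MvPolynomial.linearSubst (RingHom.id S) R₁ (MvPolynomial.C e) =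
      e • MvPolynomial.map j 1 := by
    rw [map_one, MvPolynomial.smul_eq_C_mul, mul_one, MvPolynomial.linearSubst_C, RingHom.id_apply]
  rw [h4, map_sub, map_smul, MvPolynomial.extendFunctional_map,
    MvPolynomial.extendFunctional_map, hG1, map_one, smul_eq_mul, mul_one, sub_eq_zero] at hG
  exact ⟨G p, hG⟩

namespace IsSimpleTower

variable {K V S : Type*} [Field K] [Fintype V] [CommRing S] [Algebra K S]
  {φ σ : K →+* K} {B : Matrix V V K} {Φ τ : S →+* S} {x : ℕ → V → S}

theorem pow_fundamental (h : IsSimpleTower φ σ B Φ τ x) {Q : Matrix V V S}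
    (hQ : Q.map Φ = B.map (algebraMap K S) * Q) (d : ℕ) (v u : V) :
    Φ ((τ ^ d) (Q v u)) = ∑ w, algebraMap K S ((σ ^ d) (B v w)) * (τ ^ d) (Q w u) := by
  have h1 : Φ ((τ ^ d) (Q v u)) = (τ ^ d) (Φ (Q v u)) :=
    (coe_pow_apply_of_coe_eq (j := Φ) h.comm d _)
  have h2 : Φ (Q v u) = ∑ w, algebraMap K S (B v w) * Q w u := by
    rw [← Matrix.map_apply (f := Φ), hQ, Matrix.mul_apply]
    rfl
  rw [h1, h2, map_sum]
  refine Finset.sum_congr rfl fun w _ => ?_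
  rw [map_mul, coe_pow_apply_of_coe_eq (j := algebraMap K S) fun a => (h.sigma_algebraMap a).symm]

/-- All idempotents of a simple tower with a fundamental solution matrix lie in one stage. -/
theorem exists_stage_idempotents (h : IsSimpleTower φ σ B Φ τ x) [DecidableEq V]
    (halgcl : ∀ p : Polynomial K, (∀ m : ℕ, φ (p.coeff m) = p.coeff m) → 0 < p.degree →
      ∃ a : K, φ a = a ∧ Polynomial.eval a p = 0)
    (honto : ∀ a : K, φ a = a → ∃ b : K, φ b = b ∧ σ b = a) {B' : Matrix V V K}
    (hB : B * B' = 1) {Q Q' : Matrix V V S} (hQ' : Q * Q' = 1)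
    (hQ : Q.map Φ = B.map (algebraMap K S) * Q) :
    ∃ D, ∀ e : S, e * e = e → e ∈ stageAlg K x D := by
  have := h.nontrivial
  choose φd hφd hsimple using h.simple_stage
  let j : ∀ d, stageAlg K x d →+* S := fun d => algebraMap (stageAlg K x d) S
  let R : ℕ → Matrix V V S := fun d => Q.map (τ ^ d : S →+* S)
  let 𝔟 : ℕ → Ideal (MvPolynomial V S) := fun d => substRelations (j d) (x d) (R d)
  let τd : ∀ d, stageAlg K x d →+* stageAlg K x (d + 1) := fun d =>
    (τ.comp (j d)).codRestrict (stageAlg K x (d + 1)) fun a => h.sigma_mem a.2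
  have hτd : ∀ d a, j (d + 1) (τd d a) = τ (j d a) := fun d a => rfl
  have hRτ : ∀ d v u, τ (R d v u) = R (d + 1) v u := fun d v u => by
    simp only [R, Matrix.map_apply, pow_succ']
    rfl
  have honeS : ∀ d (y : V → S) v,
      y v = ∑ w, j d ((1 : Matrix V V (stageAlg K x d)) v w) * y w := fun d y v => by
    simp [Matrix.one_apply, apply_ite]
  have hxτ : ∀ d v, τ (x d v) = ∑ w, j (d + 1) ((1 : Matrix V V _) v w) * x (d + 1) w :=
    fun d v => by rw [h.sigma_gen, ← honeS (d + 1) (x (d + 1))]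
  have hRτ' : ∀ d v u, τ (R d v u) = ∑ w, j (d + 1) ((1 : Matrix V V _) v w) * R (d + 1) w u :=
    fun d v u => by rw [hRτ, ← honeS (d + 1) fun w => R (d + 1) w u]
  obtain ⟨D, hD⟩ := exists_forall_mem_of_map_mem (𝔟 := 𝔟) h.diffSimple h.comm (fun c hc => by
      obtain ⟨a, ha, rfl⟩ := h.exists_eq_algebraMap halgcl hc
      obtain ⟨b, hb, rfl⟩ := honto a ha
      exact ⟨algebraMap K S b, by rw [h.phi_algebraMap, hb], h.sigma_algebraMap b⟩)
    (fun d f hf => map_mem_substRelations (α := φd d) (hφd d)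
      (M := (B.map (σ ^ d : K →+* K)).map (algebraMap K _)) (h.phi_gen d) (h.pow_fundamental hQ d) hf)
    (fun d f hf => map_mem_substRelations (hτd d) (hxτ d) (hRτ' d) hf)
  have step : ∀ d ≥ D, ∀ e ∈ stageAlg K x (d + 1), e * e = e → e ∈ stageAlg K x d := by
    intro d hd e hed he
    obtain ⟨p, rfl⟩ := exists_eval₂_eq_of_mem_stageAlg hed
    have hRR' : R d * Q'.map (τ ^ d : S →+* S) = 1 := by
      rw [← Matrix.map_mul, hQ', Matrix.map_one _ (map_zero _) (map_one _)]
    have hM : (B.map (σ ^ d : K →+* K)).map (algebraMap K (stageAlg K x d)) *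
        (B'.map (σ ^ d : K →+* K)).map (algebraMap K (stageAlg K x d)) = 1 := by
      rw [← Matrix.map_mul, ← Matrix.map_mul, hB, Matrix.map_one _ (map_zero _) (map_one _),
        Matrix.map_one _ (map_zero _) (map_one _)]
    obtain ⟨a, ha⟩ := exists_eq_of_map_mem_range (hτd d) (hxτ d) (hRτ' d) hRR' (hD d hd)
      (hsimple d) (fun a => (hφd d a).symm) hM (h.phi_gen d) p
      (b := ⟨_, h.sigma_mem_of_mul_self halgcl hed he⟩) rfl
    rw [← ha]
    exact a.2
  refine ⟨D, fun e he => ?_⟩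
  obtain ⟨d, hd⟩ := h.exists_mem_stage e
  have hd' : e ∈ stageAlg K x (D + d) := stageAlg_mono K x (by omega) hd
  clear hd
  induction d with
  | zero => exact hd'
  | succ d ih => exact ih (step (D + d) (by omega) e hd' he)

/-- A simple tower with a fundamental solution matrix is a cyclic product of domains. -/
theorem exists_isPeriodicIdempotent (h : IsSimpleTower φ σ B Φ τ x) [DecidableEq V]
    (halgcl : ∀ p : Polynomial K, (∀ m : ℕ, φ (p.coeff m) = p.coeff m) → 0 < p.degree →
      ∃ a : K, φ a = a ∧ Polynomial.eval a p = 0)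
    (honto : ∀ a : K, φ a = a → ∃ b : K, φ b = b ∧ σ b = a) {B' : Matrix V V K}
    (hB : B * B' = 1) {Q Q' : Matrix V V S} (hQ' : Q * Q' = 1)
    (hQ : Q.map Φ = B.map (algebraMap K S) * Q) : ∃ e t, IsPeriodicIdempotent Φ e t := by
  obtain ⟨D, hD⟩ := h.exists_stage_idempotents halgcl honto hB hQ' hQ
  obtain ⟨e, heD, t, he, hprime⟩ := h.exists_isPeriodicIdempotent_stage D
  refine ⟨e, t, he, fun a b hab => ?_⟩
  obtain ⟨d₁, h1⟩ := h.exists_mem_stage a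
  obtain ⟨d₂, h2⟩ := h.exists_mem_stage b
  obtain ⟨e', -, t', he', hprime'⟩ := h.exists_isPeriodicIdempotent_stage (max D (max d₁ d₂))
  have hidem : ∀ i, (Φ ^ i) e' * (Φ ^ i) e' = (Φ ^ i) e' := fun i => by
    rw [← map_mul, he'.mul_self]
  have hex : ∃ i, e * (Φ ^ i) e' ≠ 0 := by
    by_contra! h0
    refine he.ne_zero ?_
    rw [← he'.sum_mul e]
    exact Finset.sum_eq_zero fun i _ => by rw [mul_comm, h0]
  obtain ⟨i, hi⟩ := hex
  have hei : e * (Φ ^ i) e' = e := by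
    have h0 : (Φ ^ 0) e * ((Φ ^ i) e' * (1 - (Φ ^ i) e')) = 0 := by
      rw [mul_sub, mul_one, hidem, sub_self, mul_zero]
    rcases hprime 0 _ (hD _ (hidem i)) _ (sub_mem (one_mem _) (hD _ (hidem i))) h0 with h3 | h3
    · exact absurd h3 hi
    · rw [mul_sub, mul_one, sub_eq_zero] at h3
      exact h3.symm
  have hmono := stageAlg_mono K x
  have heq : (Φ ^ i) e' = e := by
    have h0 : (Φ ^ i) e' * (e * (1 - e)) = 0 := by
      rw [mul_sub, mul_one, he.mul_self, sub_self, mul_zero]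
    have heD' := hmono (le_max_left D (max d₁ d₂)) heD
    rcases hprime' i _ heD' _ (sub_mem (one_mem _) heD') h0 with h3 | h3
    · exact absurd (by rwa [mul_comm]) hi
    · rw [mul_sub, mul_one, mul_comm, hei, sub_eq_zero] at h3
      exact h3
  have h4 := hprime' i a (hmono ((le_max_left _ _).trans (le_max_right _ _)) h1) b
    (hmono ((le_max_right _ _).trans (le_max_right _ _)) h2)
  rw [heq] at h4
  exact h4 hab

end IsSimpleTower

namespace IsPeriodicIdempotent

variable {S : Type*} [CommRing S] {Φ : S →+* S} {e : S} {t : ℕ}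

theorem pow_apply_mod (h : IsPeriodicIdempotent Φ e t) (l : ℕ) : (Φ ^ (l % t)) e = (Φ ^ l) e := by
  have hp : Function.IsPeriodicPt Φ t e := by
    have := h.period
    rwa [RingHom.coe_pow] at this
  rw [RingHom.coe_pow, RingHom.coe_pow, hp.iterate_mod_apply]

theorem mem_nonZeroDivisors_iff (h : IsPeriodicIdempotent Φ e t) (hΦ : Function.Injective Φ)
    {x : S} : x ∈ nonZeroDivisors S ↔ ∀ i, (Φ ^ i) e * x ≠ 0 := by
  rw [mem_nonZeroDivisors_iff_right]
  refine ⟨fun hx i h0 => (h.map_pow hΦ i).ne_zero (hx _ h0), fun hx y hy => ?_⟩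
  rw [← h.sum_mul y]
  refine Finset.sum_eq_zero fun i _ => ?_
  refine ((h.map_pow hΦ i).eq_zero_or_eq_zero x y ?_).resolve_left (hx i)
  rw [mul_comm x, hy, mul_zero]

theorem pow_mul_pow (h : IsPeriodicIdempotent Φ e t) (hΦ : Function.Injective Φ) (i l : ℕ) :
    (Φ ^ i) e * (Φ ^ (l + i)) e = 0 ∨ ∀ j, (Φ ^ (l + j)) e = (Φ ^ j) e := by
  by_cases hl : l % t = 0
  · right
    intro j
    rw [← h.pow_apply_mod (l + j), Nat.add_mod, hl, zero_add, Nat.mod_mod, h.pow_apply_mod]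
  · left
    have h1 := (h.map_pow hΦ i).orthogonal (l % t) (Nat.pos_of_ne_zero hl) (Nat.mod_lt _ h.pos)
    rwa [(h.map_pow hΦ i).pow_apply_mod, ← RingHom.comp_apply, ← RingHom.mul_def, ← pow_add] at h1

/-- Endomorphisms commuting with `Φ` preserve non-zero-divisors. -/
theorem map_mem_nonZeroDivisors (h : IsPeriodicIdempotent Φ e t) (hΦ : DiffSimple Φ)
    {ψ : S →+* S} (hcomm : ∀ a, Φ (ψ a) = ψ (Φ a)) {x : S} (hx : x ∈ nonZeroDivisors S) :
    ψ x ∈ nonZeroDivisors S := by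
  have := hΦ.nontrivial
  have hinj : Function.Injective Φ := hΦ.injective (ψ := Φ) Φ fun _ => rfl
  rw [h.mem_nonZeroDivisors_iff hinj] at hx ⊢
  intro j h0
  have hsucc : ∀ i a, Φ ((Φ ^ i) a) = (Φ ^ (i + 1)) a := fun i a => by rw [pow_succ']; rfl
  have hex : ∃ i, (Φ ^ j) e * ψ ((Φ ^ i) e) ≠ 0 := by
    by_contra! h1
    refine (h.map_pow hinj j).ne_zero ?_
    rw [← mul_one ((Φ ^ j) e), ← map_one ψ, ← h.sum_eq_one, map_sum, Finset.mul_sum]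
    exact Finset.sum_eq_zero fun i _ => h1 i
  obtain ⟨i, hi⟩ := hex
  let I : Ideal S :=
    { carrier := {s | ∀ l, (Φ ^ (l + j)) e * ψ (s * (Φ ^ (l + i)) e) = 0}
      add_mem' := fun {a b} ha hb l => by rw [add_mul, map_add, mul_add, ha l, hb l, add_zero]
      zero_mem' := fun l => by rw [zero_mul, map_zero, mul_zero]
      smul_mem' := fun c a ha l => by
        rw [smul_eq_mul, mul_assoc, map_mul, mul_left_comm, ha l, mul_zero] }
  have hI : ∀ s ∈ I, Φ s ∈ I := fun s hs l => by
    have ht := h.pos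
    have h1 := congrArg Φ (hs (l + t - 1))
    have h2 : ∀ m, (Φ ^ (l + t - 1 + m + 1)) e = (Φ ^ (l + m)) e := fun m => by
      rw [show l + t - 1 + m + 1 = l + m + t by omega, pow_add, RingHom.mul_def,
        RingHom.comp_apply, h.period]
    rwa [map_mul, hcomm, map_mul, hsucc, hsucc, h2, h2, map_zero] at h1
  have hmem : x * (Φ ^ i) e ∈ I := fun l => by
    rw [mul_assoc]
    rcases h.pow_mul_pow hinj i l with h1 | h1
    · rw [h1, mul_zero, map_zero, mul_zero]
    · rw [h1, h1, map_mul, ← mul_assoc, h0, zero_mul]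
  rcases hΦ.2 I hI with h1 | h1
  · rw [h1, Ideal.mem_bot, mul_comm] at hmem
    exact hx i hmem
  · have h2 : (1 : S) ∈ I := h1 ▸ Submodule.mem_top
    refine hi ?_
    have h3 := h2 0
    rwa [zero_add, zero_add, one_mul] at h3

end IsPeriodicIdempotent

theorem isNoetherianRing_fractionRing {S : Type*} [CommRing S] {Φ : S →+* S} {e : S} {t : ℕ}
    (he : IsPeriodicIdempotent Φ e t) (hΦ : Function.Injective Φ) :
    IsNoetherianRing (FractionRing S) := by
  let E : ℕ → FractionRing S := fun i => algebraMap S _ ((Φ ^ i) e)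
  refine isNoetherianRing_iff_ideal_fg _ |>.2 fun I => ?_
  have hEI : ∀ i, ∀ x ∈ I, E i * x ≠ 0 → E i ∈ I := by
    intro i x hx hne
    obtain ⟨⟨a, s⟩, hs⟩ := IsLocalization.surj (nonZeroDivisors S) x
    have hi := he.map_pow hΦ i
    have ha : (Φ ^ i) e * a ≠ 0 := fun h0 => hne <| by
      have h1 := congrArg (algebraMap S (FractionRing S)) h0
      rw [map_mul, ← hs, ← mul_assoc, map_zero] at h1
      exact ((IsLocalization.map_units (FractionRing S) s).mul_left_eq_zero).1 h1
    let z := (Φ ^ i) e * a + (1 - (Φ ^ i) e)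
    have hz : z ∈ nonZeroDivisors S := by
      rw [he.mem_nonZeroDivisors_iff hΦ]
      intro j
      have hj := he.map_pow hΦ j
      rcases hj.mul_eq_zero_or_eq hi.mul_self with h1 | h1
      · have : (Φ ^ j) e * z = (Φ ^ j) e := by
          simp only [z]
          linear_combination (a - 1) * h1
        rw [this]
        exact hj.ne_zero
      · have h2 : (Φ ^ i) e = (Φ ^ j) e := by
          rcases hi.mul_eq_zero_or_eq hj.mul_self with h2 | h2
          · exact absurd (by rw [← h1, mul_comm, h2]) hj.ne_zero
          · rw [← h2, mul_comm, h1]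
        have : (Φ ^ j) e * z = (Φ ^ i) e * a := by
          simp only [z]
          rw [← h2]
          linear_combination (a - 1) * hi.mul_self
        rwa [this]
    have hzu : IsUnit (algebraMap S (FractionRing S) z) :=
      IsLocalization.map_units _ (⟨z, hz⟩ : nonZeroDivisors S)
    have hEz : E i * algebraMap S _ z = E i * algebraMap S _ a := by
      simp only [E]
      rw [← map_mul, ← map_mul]
      congr 1
      simp only [z]
      linear_combination (a - 1) * hi.mul_self
    have hmem : E i * algebraMap S _ z ∈ I := by
      rw [hEz, ← hs]
      exact I.mul_mem_left _ (I.mul_mem_right _ hx)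
    exact (I.mul_unit_mem_iff_mem hzu).1 hmem
  classical
  refine ⟨((Finset.range t).image E).filter (· ∈ I), le_antisymm (Ideal.span_le.2 ?_) ?_⟩
  · intro x hx
    exact (Finset.mem_filter.1 (Finset.mem_coe.1 hx)).2
  · intro x hx
    have hsum : x = ∑ i ∈ Finset.range t, E i * x := by
      rw [← Finset.sum_mul, ← map_sum, he.sum_eq_one, map_one, one_mul]
    rw [hsum]
    refine sum_mem fun i hi => ?_
    by_cases h0 : E i * x = 0
    · rw [h0]
      exact zero_mem _
    · refine Ideal.mul_mem_right _ _ (Ideal.subset_span ?_)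
      exact Finset.mem_coe.2 (Finset.mem_filter.2 ⟨Finset.mem_image_of_mem _ hi, hEI i x hx h0⟩)

/-- The total ring of fractions of a `Φ`-simple cyclic product of domains is a `Φ`-pseudo field
with the same constants. -/
theorem exists_pseudoField_fractionRing {S : Type*} [CommRing S] {Φ τ : S →+* S}
    (hΦ : DiffSimple Φ) (hcomm : ∀ a, Φ (τ a) = τ (Φ a)) {e : S} {t : ℕ}
    (he : IsPeriodicIdempotent Φ e t) :
    ∃ Φ' τ' : FractionRing S →+* FractionRing S,
      (∀ a, Φ' (algebraMap S _ a) = algebraMap S _ (Φ a)) ∧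
      (∀ a, τ' (algebraMap S _ a) = algebraMap S _ (τ a)) ∧
      Φ'.comp τ' = τ'.comp Φ' ∧ PseudoField (FractionRing S) Φ' ∧
      ∀ c, Φ' c = c → ∃ a, Φ a = a ∧ algebraMap S _ a = c := by
  have := hΦ.nontrivial
  have hinj : Function.Injective Φ := hΦ.injective (ψ := Φ) Φ fun _ => rfl
  have hL : Function.Injective (algebraMap S (FractionRing S)) := IsFractionRing.injective _ _
  have hNΦ : nonZeroDivisors S ≤ (nonZeroDivisors S).comap Φ := fun x hx =>
    he.map_mem_nonZeroDivisors hΦ (fun _ => rfl) hx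
  have hNτ : nonZeroDivisors S ≤ (nonZeroDivisors S).comap τ := fun x hx =>
    he.map_mem_nonZeroDivisors hΦ hcomm hx
  let Φ' : FractionRing S →+* FractionRing S := IsLocalization.map (FractionRing S) Φ hNΦ
  let τ' : FractionRing S →+* FractionRing S := IsLocalization.map (FractionRing S) τ hNτ
  have hΦ' : ∀ a, Φ' (algebraMap S _ a) = algebraMap S _ (Φ a) := IsLocalization.map_eq hNΦ
  have hτ' : ∀ a, τ' (algebraMap S _ a) = algebraMap S _ (τ a) := IsLocalization.map_eq hNτ
  refine ⟨Φ', τ', hΦ', hτ', ?_, ⟨⟨bot_ne_top, fun I hI => ?_⟩,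
    isNoetherianRing_fractionRing he hinj, fun x hx => ?_⟩, fun c hc => ?_⟩
  · refine IsLocalization.ringHom_ext (nonZeroDivisors S) (RingHom.ext fun a => ?_)
    simp only [RingHom.comp_apply, hΦ', hτ', hcomm]
  · refine (hΦ.2 (I.comap (algebraMap S _)) fun x hx => ?_).imp (fun h => ?_) fun h => ?_
    · rw [Ideal.mem_comap, ← hΦ']
      exact hI _ hx
    · refine (Submodule.eq_bot_iff _).2 fun x hx => ?_
      obtain ⟨⟨a, s⟩, hs⟩ := IsLocalization.surj (nonZeroDivisors S) x
      have ha : a ∈ I.comap (algebraMap S (FractionRing S)) := by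
        rw [Ideal.mem_comap, ← hs]
        exact I.mul_mem_right _ hx
      rw [h, Ideal.mem_bot] at ha
      simp only [ha, map_zero] at hs
      exact ((IsLocalization.map_units (FractionRing S) s).mul_left_eq_zero).1 hs
    · rw [Ideal.eq_top_iff_one] at h ⊢
      simpa using h
  · obtain ⟨⟨a, s⟩, hs⟩ := IsLocalization.surj (nonZeroDivisors S) x
    have hu := IsLocalization.map_units (FractionRing S) s
    have ha : a ∈ nonZeroDivisors S := by
      rw [mem_nonZeroDivisors_iff_right] at hx ⊢
      intro y hy
      have h1 := congrArg (algebraMap S (FractionRing S)) hy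
      rw [map_mul, ← hs, map_zero, ← mul_assoc] at h1
      exact hL (by rw [hx _ (hu.mul_left_eq_zero.1 h1), map_zero])
    have hau := IsLocalization.map_units (FractionRing S) (⟨a, ha⟩ : nonZeroDivisors S)
    rw [← hs] at hau
    exact isUnit_of_mul_isUnit_left hau
  · let I : Ideal S :=
      { carrier := {s | ∃ a, algebraMap S (FractionRing S) a = algebraMap S _ s * c}
        add_mem' := by
          rintro s s' ⟨a, ha⟩ ⟨a', ha'⟩
          exact ⟨a + a', by rw [map_add, map_add, ha, ha', add_mul]⟩
        zero_mem' := ⟨0, by rw [map_zero, zero_mul]⟩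
        smul_mem' := by
          rintro r s ⟨a, ha⟩
          exact ⟨r * a, by rw [smul_eq_mul, map_mul, map_mul, ha, mul_assoc]⟩ }
    have hI : ∀ s ∈ I, Φ s ∈ I := by
      rintro s ⟨a, ha⟩
      exact ⟨Φ a, by rw [← hΦ', ha, map_mul, hc, hΦ']⟩
    rcases hΦ.2 I hI with h | h
    · obtain ⟨⟨a, s⟩, hs⟩ := IsLocalization.surj (nonZeroDivisors S) c
      have hsI : (s : S) ∈ I := ⟨a, by rw [mul_comm, hs]⟩
      rw [h, Ideal.mem_bot] at hsI
      exact absurd hsI (nonZeroDivisors.ne_zero s.2)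
    · obtain ⟨a, ha⟩ : (1 : S) ∈ I := h ▸ Submodule.mem_top
      rw [map_one, one_mul] at ha
      exact ⟨a, hL (by rw [← hΦ', ha, hc]), ha⟩

/-- The matrix of the linear system satisfied by the entries of solution matrices of the systems
with matrices `A` and `D`. -/
def pairMatrix {ι R : Type*} [DecidableEq ι] [CommRing R] (A D : Matrix ι ι R) :
    Matrix ((ι ⊕ ι) × ι) ((ι ⊕ ι) × ι) R :=
  Matrix.kroneckerMap (· * ·) (Matrix.fromBlocks A 0 0 D) 1

section pairMatrix

variable {ι R R' : Type*} [DecidableEq ι] [CommRing R] [CommRing R']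

theorem pairMatrix_one : pairMatrix (1 : Matrix ι ι R) 1 = 1 := by
  simp only [pairMatrix]
  rw [Matrix.fromBlocks_one, Matrix.one_kronecker_one]

theorem pairMatrix_map (f : R →+* R') (A D : Matrix ι ι R) :
    (pairMatrix A D).map f = pairMatrix (A.map f) (D.map f) := by
  ext ⟨a | a, b⟩ ⟨c | c, d⟩ <;> simp [pairMatrix, Matrix.one_apply, apply_ite f]

variable [Fintype ι]

theorem pairMatrix_mul (A D A' D' : Matrix ι ι R) :
    pairMatrix A D * pairMatrix A' D' = pairMatrix (A * A') (D * D') := by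
  simp only [pairMatrix]
  rw [← Matrix.mul_kronecker_mul, Matrix.fromBlocks_multiply]
  simp

theorem sum_pairMatrix_inl (j : R →+* R') (A D : Matrix ι ι R) (y : (ι ⊕ ι) × ι → R') (p q : ι) :
    ∑ w, j (pairMatrix A D (Sum.inl p, q) w) * y w =
      (A.map j * Matrix.of fun p q => y (Sum.inl p, q)) p q := by
  simp [pairMatrix, Fintype.sum_prod_type, Matrix.one_apply, Matrix.mul_apply, apply_ite j]

theorem sum_pairMatrix_inr (j : R →+* R') (A D : Matrix ι ι R) (y : (ι ⊕ ι) × ι → R') (p q : ι) :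
    ∑ w, j (pairMatrix A D (Sum.inr p, q) w) * y w =
      (D.map j * Matrix.of fun p q => y (Sum.inr p, q)) p q := by
  simp [pairMatrix, Fintype.sum_prod_type, Matrix.one_apply, Matrix.mul_apply, apply_ite j]

end pairMatrix

/-- Existence of a simple tower generated by a fundamental solution matrix `Y` of `φ(y) = Ay` and
its inverse, whose transpose is `U`. -/
theorem exists_isSimpleTower_pairMatrix.{w} {K : Type w} [Field K] {n : ℕ} {φ σ : K →+* K}
    (hcomm : φ.comp σ = σ.comp φ) {A D : Matrix (Fin n) (Fin n) K} (hAD : A * D.transpose = 1) :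
    ∃ (S : Type w) (_ : CommRing S) (_ : Algebra K S) (Φ τ : S →+* S)
      (x : ℕ → (Fin n ⊕ Fin n) × Fin n → S),
      IsSimpleTower φ σ (pairMatrix A D) Φ τ x ∧
        (Matrix.of fun p q => x 0 (Sum.inl p, q)) *
          (Matrix.of fun p q => x 0 (Sum.inr p, q)).transpose = 1 := by
  let V := (Fin n ⊕ Fin n) × Fin n
  have hDA : D * A.transpose = 1 := by
    rw [← Matrix.transpose_inj]
    simpa using hAD
  have hB : pairMatrix A D * pairMatrix D.transpose A.transpose = 1 := by
    rw [pairMatrix_mul, hAD, hDA, pairMatrix_one]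
  let Y : Matrix (Fin n) (Fin n) (MvPolynomial (ℕ × V) K) :=
    Matrix.of fun p q => MvPolynomial.X (0, (Sum.inl p, q))
  let U : Matrix (Fin n) (Fin n) (MvPolynomial (ℕ × V) K) :=
    Matrix.of fun p q => MvPolynomial.X (0, (Sum.inr p, q))
  let M : Matrix (Fin n) (Fin n) (MvPolynomial (ℕ × V) K) := Y * U.transpose - 1
  let T : MvPolynomial (ℕ × V) K →+* MvPolynomial (ℕ × V) K := towerPhi φ σ (pairMatrix A D)
  have hY : Y.map T = A.map MvPolynomial.C * Y := by
    ext1 p q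
    rw [Matrix.map_apply]
    change towerPhi φ σ (pairMatrix A D) (MvPolynomial.X (0, (Sum.inl p, q))) = _
    rw [towerPhi_X]
    exact sum_pairMatrix_inl MvPolynomial.C A D (fun w => MvPolynomial.X (0, w)) p q
  have hU : U.map T = D.map MvPolynomial.C * U := by
    ext1 p q
    rw [Matrix.map_apply]
    change towerPhi φ σ (pairMatrix A D) (MvPolynomial.X (0, (Sum.inr p, q))) = _
    rw [towerPhi_X]
    exact sum_pairMatrix_inr MvPolynomial.C A D (fun w => MvPolynomial.X (0, w)) p q
  have hM : M.map T = A.map MvPolynomial.C * M * (D.map MvPolynomial.C).transpose := by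
    have h1 : A.map MvPolynomial.C * (D.map MvPolynomial.C).transpose =
        (1 : Matrix (Fin n) (Fin n) (MvPolynomial (ℕ × V) K)) := by
      rw [← Matrix.transpose_map, ← Matrix.map_mul, hAD, Matrix.map_one _ (map_zero _) (map_one _)]
    have h2 : M.map T = Y.map T * (U.map T).transpose - 1 := by
      rw [← Matrix.transpose_map, ← Matrix.map_mul, ← Matrix.map_one T (map_zero T) (map_one T),
        ← Matrix.map_sub T (map_sub T)]
    rw [h2, hY, hU, Matrix.transpose_mul, ← h1]
    simp only [M, Matrix.mul_sub, Matrix.sub_mul, Matrix.mul_one, Matrix.mul_assoc]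
  let gens : Set (MvPolynomial (ℕ × V) K) :=
    {f | ∃ p q, f = M p q} ∪ {f | ∃ v : ℕ × V, 1 ≤ v.1 ∧ f = MvPolynomial.X v}
  have hbase : ∀ f ∈ Ideal.span gens, T f ∈ Ideal.span gens := by
    refine Ideal.span_stable ?_
    rintro _ (⟨p, q, rfl⟩ | ⟨v, hv, rfl⟩)
    · rw [← Matrix.map_apply (f := T), hM, Matrix.mul_apply]
      refine sum_mem fun i _ => Ideal.mul_mem_right _ _ ?_
      rw [Matrix.mul_apply]
      exact sum_mem fun k _ => Ideal.mul_mem_left _ _ (Ideal.subset_span (Or.inl ⟨k, i, rfl⟩))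
    · change towerPhi φ σ (pairMatrix A D) (MvPolynomial.X v) ∈ _
      rw [towerPhi_X]
      exact sum_mem fun w _ => Ideal.mul_mem_left _ _ (Ideal.subset_span (Or.inr ⟨(v.1, w), hv, rfl⟩))
  have hproper : Ideal.span gens ≠ ⊤ := by
    let ev : MvPolynomial (ℕ × V) K →+* K := MvPolynomial.eval fun v =>
      if v.1 = 0 then (v.2.1.elim (fun p => if p = v.2.2 then 1 else 0)
        fun p => if p = v.2.2 then 1 else 0) else 0
    have hle : Ideal.span gens ≤ RingHom.ker ev := by
      refine Ideal.span_le.2 ?_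
      rintro _ (⟨p, q, rfl⟩ | ⟨v, hv, rfl⟩)
      · by_cases hpq : p = q <;>
          simp [M, Y, U, ev, Matrix.mul_apply, RingHom.mem_ker, hpq]
      · have : v.1 ≠ 0 := by omega
        simp [ev, RingHom.mem_ker, this]
    intro h
    have h1 : (1 : MvPolynomial (ℕ × V) K) ∈ RingHom.ker ev := hle (h ▸ Submodule.mem_top)
    rw [RingHom.mem_ker, map_one] at h1
    exact one_ne_zero h1
  obtain ⟨S, _, _, Φ, τ, x, hx, hrel⟩ := exists_isSimpleTower hcomm hB hbase hproper
    fun v hv => Ideal.subset_span (Or.inr ⟨v, hv, rfl⟩)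
  refine ⟨S, _, _, Φ, τ, x, hx, ?_⟩
  ext1 p q
  have h1 := hrel ((∑ i, MvPolynomial.X (Sum.inl p, i) * MvPolynomial.X (Sum.inr q, i)) -
    (1 : Matrix (Fin n) (Fin n) (MvPolynomial V K)) p q) (by
      refine Ideal.subset_span (Or.inl ⟨p, q, ?_⟩)
      simp only [Matrix.one_apply]
      split_ifs with hpq <;> simp [M, Y, U, Matrix.mul_apply, hpq])
  rw [map_sub, sub_eq_zero, map_sum] at h1
  rw [Matrix.mul_apply]
  simp only [Matrix.one_apply] at h1 ⊢
  split_ifs at h1 ⊢ <;> simpa using h1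

/-- The determinant and the adjugate of a matrix with entries in a subring have entries in it. -/
theorem Subring.det_mem_and_adjugate_mem {ι R : Type*} [Fintype ι] [DecidableEq ι] [CommRing R]
    (T : Subring R) {M : Matrix ι ι R} (hM : ∀ p q, M p q ∈ T) :
    M.det ∈ T ∧ ∀ p q, M.adjugate p q ∈ T := by
  let N : Matrix ι ι T := Matrix.of fun p q => ⟨M p q, hM p q⟩
  have hN : T.subtype.mapMatrix N = M := rfl
  rw [← hN, ← RingHom.map_det, ← RingHom.map_adjugate]
  exact ⟨N.det.2, fun p q => (N.adjugate p q).2⟩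

theorem Matrix.adjugate_eq_det_smul_of_mul_eq_one {ι R : Type*} [Fintype ι] [DecidableEq ι]
    [CommRing R] {M N : Matrix ι ι R} (h : M * N = 1) : M.adjugate = M.det • N := by
  rw [← Matrix.mul_one M.adjugate, ← h, ← Matrix.mul_assoc, Matrix.adjugate_mul,
    Matrix.smul_mul, Matrix.one_mul]

namespace IsSimpleTower

variable {K S : Type*} [Field K] [CommRing S] [Algebra K S] {n : ℕ} {φ σ : K →+* K}
  {A D : Matrix (Fin n) (Fin n) K} {Φ τ : S →+* S} {x : ℕ → (Fin n ⊕ Fin n) × Fin n → S}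

theorem sigma_pow_gen (h : IsSimpleTower φ σ (pairMatrix A D) Φ τ x) (i : ℕ)
    (v : (Fin n ⊕ Fin n) × Fin n) : (τ ^ i) (x 0 v) = x i v := by
  induction i with
  | zero => rfl
  | succ i ih => rw [pow_succ', RingHom.mul_def, RingHom.comp_apply, ih, h.sigma_gen]

theorem phi_fundamental (h : IsSimpleTower φ σ (pairMatrix A D) Φ τ x) :
    (Matrix.of fun p q => x 0 (Sum.inl p, q)).map Φ =
        A.map (algebraMap K S) * Matrix.of (fun p q => x 0 (Sum.inl p, q)) ∧
      (Matrix.of fun p q => x 0 (Sum.inr p, q)).map Φ =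
        D.map (algebraMap K S) * Matrix.of (fun p q => x 0 (Sum.inr p, q)) := by
  constructor
  · ext1 p q
    rw [Matrix.map_apply, Matrix.of_apply, h.phi_gen]
    exact sum_pairMatrix_inl (algebraMap K S) A D (x 0) p q
  · ext1 p q
    rw [Matrix.map_apply, Matrix.of_apply, h.phi_gen]
    exact sum_pairMatrix_inr (algebraMap K S) A D (x 0) p q

theorem exists_isPeriodicIdempotent_of_pairMatrix (h : IsSimpleTower φ σ (pairMatrix A D) Φ τ x)
    (halgcl : ∀ p : Polynomial K, (∀ m : ℕ, φ (p.coeff m) = p.coeff m) → 0 < p.degree →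
      ∃ a : K, φ a = a ∧ Polynomial.eval a p = 0)
    (honto : ∀ a : K, φ a = a → ∃ b : K, φ b = b ∧ σ b = a) (hAD : A * D.transpose = 1)
    (hYU : (Matrix.of fun p q => x 0 (Sum.inl p, q)) *
      (Matrix.of fun p q => x 0 (Sum.inr p, q)).transpose = 1) :
    ∃ e t, IsPeriodicIdempotent Φ e t := by
  have hDA : D * A.transpose = 1 := by
    rw [← Matrix.transpose_inj]
    simpa using hAD
  have hUY : (Matrix.of fun p q => x 0 (Sum.inr p, q)) *
      (Matrix.of fun p q => x 0 (Sum.inl p, q)).transpose = 1 := by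
    rw [← Matrix.transpose_inj, Matrix.transpose_mul, Matrix.transpose_transpose, hYU,
      Matrix.transpose_one]
  refine h.exists_isPeriodicIdempotent halgcl honto
    (B' := pairMatrix D.transpose A.transpose)
    (Q := pairMatrix (Matrix.of fun p q => x 0 (Sum.inl p, q))
      (Matrix.of fun p q => x 0 (Sum.inr p, q)))
    (Q' := pairMatrix (Matrix.of fun p q => x 0 (Sum.inr p, q)).transpose
      (Matrix.of fun p q => x 0 (Sum.inl p, q)).transpose) ?_ ?_ ?_
  · rw [pairMatrix_mul, hAD, hDA, pairMatrix_one]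
  · rw [pairMatrix_mul, hYU, hUY, pairMatrix_one]
  · rw [pairMatrix_map, pairMatrix_map, pairMatrix_mul, h.phi_fundamental.1, h.phi_fundamental.2]

/-- Up to unit denominators, the tower is contained in any subring of `L` that contains the base
field and the solution matrices. -/
theorem exists_unit_mul_mem (h : IsSimpleTower φ σ (pairMatrix A D) Φ τ x)
    (hYU : (Matrix.of fun p q => x 0 (Sum.inl p, q)) *
      (Matrix.of fun p q => x 0 (Sum.inr p, q)).transpose = 1)
    {L : Type*} [CommRing L] (j : S →+* L) {T : Subring L}
    (hK : ∀ a, j (algebraMap K S a) ∈ T) (hY : ∀ i p q, j (x i (Sum.inl p, q)) ∈ T) (s : S) :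
    ∃ u ∈ T, IsUnit u ∧ j s * u ∈ T := by
  obtain ⟨d, hd⟩ := h.exists_mem_stage s
  induction hd using Algebra.adjoin_induction with
  | mem y hy =>
    obtain ⟨i, -, ⟨p | p, q⟩, rfl⟩ := hy
    · exact ⟨1, T.one_mem, isUnit_one, by rw [mul_one]; exact hY i p q⟩
    · let Y : Matrix (Fin n) (Fin n) L := Matrix.of fun p q => j (x i (Sum.inl p, q))
      let U : Matrix (Fin n) (Fin n) L := Matrix.of fun p q => j (x i (Sum.inr p, q))
      have hYUi : Y * U.transpose = 1 := by
        have h1 := congrArg (fun M => M.map (j.comp (τ ^ i))) hYU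
        rw [Matrix.map_mul, Matrix.map_one _ (map_zero _) (map_one _)] at h1
        convert h1 using 2
        · ext p q
          simp [Y, ← h.sigma_pow_gen i]
        · ext p q
          simp [U, ← h.sigma_pow_gen i]
      have hmem := T.det_mem_and_adjugate_mem (M := Y) fun p q => hY i p q
      refine ⟨Y.det, hmem.1, Matrix.isUnit_det_of_right_inverse hYUi, ?_⟩
      have h1 := hmem.2 q p
      rw [Matrix.adjugate_eq_det_smul_of_mul_eq_one hYUi, Matrix.smul_apply, smul_eq_mul,
        mul_comm] at h1
      exact h1
  | algebraMap r => exact ⟨1, T.one_mem, isUnit_one, by rw [mul_one]; exact hK r⟩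
  | add a b _ _ ha hb =>
    obtain ⟨u, hu, huu, hau⟩ := ha
    obtain ⟨v, hv, hvu, hbv⟩ := hb
    refine ⟨u * v, T.mul_mem hu hv, huu.mul hvu, ?_⟩
    rw [map_add, show (j a + j b) * (u * v) = (j a * u) * v + (j b * v) * u by ring]
    exact T.add_mem (T.mul_mem hau hv) (T.mul_mem hbv hu)
  | mul a b _ _ ha hb =>
    obtain ⟨u, hu, huu, hau⟩ := ha
    obtain ⟨v, hv, hvu, hbv⟩ := hb
    refine ⟨u * v, T.mul_mem hu hv, huu.mul hvu, ?_⟩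
    rw [map_mul, mul_mul_mul_comm]
    exact T.mul_mem hau hbv

end IsSimpleTower

/-- Existence of `σ`-Picard–Vessiot extensions: if `K` is a `φσ`-field whose field of
`φ`-constants `K^φ` is algebraically closed and mapped onto itself by `σ`, then for every
`A ∈ GLₙ(K)` there exists a `σ`-PV extension for `φ(y) = Ay`. -/
theorem exists_sigma_pv_extension
    {K : Type u} [Field K] {n : ℕ}
    (φ σ : K →+* K) (hcomm : φ.comp σ = σ.comp φ)
    (honto : ∀ a : K, φ a = a → ∃ b : K, φ b = b ∧ σ b = a)
    -- `K^φ` is algebraically closed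
    (halgcl : ∀ p : Polynomial K, (∀ m : ℕ, φ (p.coeff m) = p.coeff m) → 0 < p.degree →
      ∃ a : K, φ a = a ∧ Polynomial.eval a p = 0)
    (A : Matrix (Fin n) (Fin n) K) (hA : IsUnit A.det) :
    ∃ (L : Type u) (_ : CommRing L) (Φ σ' : L →+* L) (ι : K →+* L),
      Function.Injective ι ∧
      Φ.comp ι = ι.comp φ ∧
      σ'.comp ι = ι.comp σ ∧
      Φ.comp σ' = σ'.comp Φ ∧
      -- `(L, Φ)` is a `φ`-pseudo field
      PseudoField L Φ ∧
      -- the `Φ`-constants of `L` are exactly `ι(K^φ)`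
      (∀ x : L, Φ x = x ↔ ∃ a : K, φ a = a ∧ ι a = x) ∧
      -- a fundamental solution matrix `Y` that `σ`-generates `L` over `K`
      ∃ Y : Matrix (Fin n) (Fin n) L, IsUnit Y.det ∧ Y.map ⇑Φ = A.map ⇑ι * Y ∧
        ∀ x : L, ∃ a b : L,
          a ∈ Subring.closure
            (Set.range ι ∪ {z : L | ∃ (i : ℕ) (p q : Fin n), (Y.map ((⇑σ')^[i])) p q = z}) ∧
          b ∈ Subring.closure
            (Set.range ι ∪ {z : L | ∃ (i : ℕ) (p q : Fin n), (Y.map ((⇑σ')^[i])) p q = z}) ∧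
          IsUnit b ∧ x * b = a := by
  have hAD : A * (A⁻¹).transpose.transpose = 1 := by
    rw [Matrix.transpose_transpose, Matrix.mul_nonsing_inv A hA]
  obtain ⟨S, _, _, Φ, τ, x, h, hYU⟩ := exists_isSimpleTower_pairMatrix hcomm hAD
  obtain ⟨e, t, he⟩ := h.exists_isPeriodicIdempotent_of_pairMatrix halgcl honto hAD hYU
  obtain ⟨Φ', τ', hΦ', hτ', hcomm', hpf, hconst⟩ :=
    exists_pseudoField_fractionRing h.diffSimple h.comm he
  have := hpf.1.nontrivial
  let j : S →+* FractionRing S := algebraMap S (FractionRing S)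
  let ι : K →+* FractionRing S := j.comp (algebraMap K S)
  let Y : Matrix (Fin n) (Fin n) (FractionRing S) :=
    (Matrix.of fun p q => x 0 (Sum.inl p, q)).map j
  have hiter : ∀ i p q, Y.map (τ'^[i]) p q = j (x i (Sum.inl p, q)) := fun i p q => by
    rw [← h.sigma_pow_gen, coe_pow_apply_of_coe_eq (j := j) (fun a => (hτ' a).symm),
      RingHom.coe_pow]
    rfl
  refine ⟨FractionRing S, inferInstance, Φ', τ', ι, ι.injective, RingHom.ext fun a => ?_,
    RingHom.ext fun a => ?_, hcomm', hpf, fun c => ⟨fun hc => ?_, ?_⟩, Y, ?_, ?_, fun c => ?_⟩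
  · change Φ' (j (algebraMap K S a)) = j (algebraMap K S (φ a))
    rw [hΦ', h.phi_algebraMap]
  · change τ' (j (algebraMap K S a)) = j (algebraMap K S (σ a))
    rw [hτ', h.sigma_algebraMap]
  · obtain ⟨s, hs, rfl⟩ := hconst c hc
    obtain ⟨a, ha, rfl⟩ := h.exists_eq_algebraMap halgcl hs
    exact ⟨a, ha, rfl⟩
  · rintro ⟨a, ha, rfl⟩
    change Φ' (j (algebraMap K S a)) = j (algebraMap K S a)
    rw [hΦ', h.phi_algebraMap, ha]
  · refine Matrix.isUnit_det_of_right_inverse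
      (B := (Matrix.of fun p q => x 0 (Sum.inr p, q)).transpose.map j) ?_
    rw [← Matrix.map_mul, hYU, Matrix.map_one _ (map_zero _) (map_one _)]
  · have h1 : Y.map Φ' = ((Matrix.of fun p q => x 0 (Sum.inl p, q)).map Φ).map j := by
      ext p q
      exact hΦ' _
    rw [h1, h.phi_fundamental.1, Matrix.map_mul]
    rfl
  · let T : Subring (FractionRing S) := Subring.closure
      (Set.range ι ∪ {z | ∃ (i : ℕ) (p q : Fin n), (Y.map ((⇑τ')^[i])) p q = z})
    have hT := h.exists_unit_mul_mem hYU j (T := T)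
      (fun a => Subring.subset_closure (Or.inl ⟨a, rfl⟩))
      (fun i p q => Subring.subset_closure (Or.inr ⟨i, p, q, hiter i p q⟩))
    obtain ⟨⟨a, s⟩, hs⟩ := IsLocalization.surj (nonZeroDivisors S) c
    obtain ⟨u, hu, huu, hau⟩ := hT a
    obtain ⟨v, hv, hvu, hsv⟩ := hT s
    refine ⟨j a * u * v, j s * v * u, T.mul_mem hau hv, T.mul_mem hsv hu,
      ((IsLocalization.map_units (FractionRing S) s).mul hvu).mul huu, ?_⟩
    change c * j s = j a at hs
    rw [← hs]
    ring
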